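/- The Open Coloring Axiom implies that D* is not a continuous image of ℕ*: assume that for every separable metric space X and every symmetric open set K₀ ⊆ X × X disjoint from the diagonal, either there is an uncountable Y ⊆ X such that (y,y') ∈ K₀ for all distinct y, y' ∈ Y, or X is the union of countably many sets Xₙ such that (y,y') ∉ K₀ for all distinct y, y' ∈ Xₙ. Then there is no continuous surjection from ℕ* onto D*, where D = ℕ × (ℕ+1). -/

import Mathlib

open Set Topology Function

noncomputable section

/-- The Open Coloring Axiom: for every separable metric space `X` and every symmetric
open `K₀ ⊆ X × X` disjoint from the diagonal, either there is an uncountable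
`K₀`-homogeneous set, or `X` is a countable union of `K₁`-homogeneous sets. -/
def OpenColoringAxiom : Prop :=
  ∀ (X : Type) [MetricSpace X], TopologicalSpace.SeparableSpace X →
    ∀ K : Set (X × X), IsOpen K → (∀ p ∈ K, (p.2, p.1) ∈ K) → (∀ x : X, (x, x) ∉ K) →
      (∃ Y : Set X, ¬ Y.Countable ∧ ∀ y ∈ Y, ∀ y' ∈ Y, y ≠ y' → (y, y') ∈ K) ∨
      (∃ Xn : ℕ → Set X, (⋃ n, Xn n) = Set.univ ∧
        ∀ n : ℕ, ∀ y ∈ Xn n, ∀ y' ∈ Xn n, y ≠ y' → (y, y') ∉ K)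

/-- The space `D = ℕ × (ℕ + 1)`, where `ℕ + 1` is the one-point compactification of
the discrete space `ℕ`. -/
abbrev SpaceD : Type := ℕ × OnePoint ℕ

/-- The Čech–Stone remainder `ℕ* = βℕ ∖ ℕ` of the discrete space `ℕ`. -/
def NatStar : Set (StoneCech ℕ) :=
  (Set.range (stoneCechUnit : ℕ → StoneCech ℕ))ᶜ

/-- The Čech–Stone remainder `D* = βD ∖ D`. -/
def DStar : Set (StoneCech SpaceD) :=
  (Set.range (stoneCechUnit : SpaceD → StoneCech SpaceD))ᶜ

namespace OCAProof

/-- Agreement of two sequences below `N`. -/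
def Agr {A : Type} (N : ℕ) (s t : ℕ → A) : Prop := ∀ i < N, s i = t i

theorem Agr.refl {A : Type} (N : ℕ) (s : ℕ → A) : Agr N s s := fun _ _ => rfl
theorem Agr.symm {A : Type} {N : ℕ} {s t : ℕ → A} (h : Agr N s t) : Agr N t s :=
  fun i hi => (h i hi).symm
theorem Agr.trans {A : Type} {N : ℕ} {s t u : ℕ → A} (h : Agr N s t) (h' : Agr N t u) :
    Agr N s u := fun i hi => (h i hi).trans (h' i hi)
theorem Agr.mono {A : Type} {N M : ℕ} {s t : ℕ → A} (h : Agr N s t) (hM : M ≤ N) :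
    Agr M s t := fun i hi => h i (lt_of_lt_of_le hi hM)

/-- `s` below `N`, `t` from `N` on. -/
def spl {A : Type} (N : ℕ) (s t : ℕ → A) : ℕ → A := fun i => if i < N then s i else t i

theorem spl_lt {A : Type} {N : ℕ} {s t : ℕ → A} {i : ℕ} (h : i < N) : spl N s t i = s i := by
  simp [spl, h]
theorem spl_ge {A : Type} {N : ℕ} {s t : ℕ → A} {i : ℕ} (h : N ≤ i) : spl N s t i = t i := by
  simp [spl, not_lt.mpr h]
theorem agr_spl {A : Type} (N : ℕ) (s t : ℕ → A) : Agr N (spl N s t) s :=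
  fun _ hi => spl_lt hi

theorem not_countable_bool : ¬ Countable (ℕ → Bool) := by
  classical
  intro h
  obtain ⟨g, hg⟩ := h
  refine Function.cantor_injective (fun s : Set ℕ => g (fun n => decide (n ∈ s))) ?_
  intro s t hst
  have := hg hst
  ext n
  have h2 := congrFun this n
  simpa using h2

/-! ### The binary heap -/

/-- The path through the binary heap given by `x`. -/
def path (x : ℕ → Bool) : ℕ → ℕ
  | 0 => 1
  | k + 1 => 2 * path x k + (if x k then 1 else 0)

theorem path_succ (x : ℕ → Bool) (k : ℕ) :
    path x (k + 1) = 2 * path x k + (if x k then 1 else 0) := rfl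

theorem path_half (x : ℕ → Bool) (k : ℕ) : path x (k + 1) / 2 = path x k := by
  rw [path_succ]; split_ifs <;> omega

theorem path_gt (x : ℕ → Bool) (k : ℕ) : k < path x k := by
  induction k with
  | zero => simp [path]
  | succ k ih => rw [path_succ]; split_ifs <;> omega

theorem path_eq_of_agr {x x' : ℕ → Bool} {n : ℕ} (h : Agr n x x') : path x n = path x' n := by
  induction n with
  | zero => rfl
  | succ n ih =>
    rw [path_succ, path_succ, ih (h.mono (Nat.le_succ n)), h n (Nat.lt_succ_self n)]

theorem path_inj {x x' : ℕ → Bool} : ∀ {n n' : ℕ}, path x n = path x' n' → n = n' ∧ Agr n x x' := by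
  intro n
  induction n with
  | zero =>
    intro n' h
    cases n' with
    | zero => exact ⟨rfl, fun i hi => absurd hi (Nat.not_lt_zero i)⟩
    | succ n' =>
      exfalso
      have := path_gt x' n'
      rw [path_succ] at h
      simp only [path] at h
      split_ifs at h <;> omega
  | succ n ih =>
    intro n' h
    cases n' with
    | zero =>
      exfalso
      have := path_gt x n
      rw [path_succ] at h
      simp only [path] at h
      split_ifs at h <;> omega
    | succ n' =>
      have h2 : path x n = path x' n' := by rw [← path_half x n, ← path_half x' n', h]
      obtain ⟨rfl, ha⟩ := ih h2
      refine ⟨rfl, fun i hi => ?_⟩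
      rcases Nat.lt_succ_iff_lt_or_eq.mp hi with hi | rfl
      · exact ha i hi
      · rw [path_succ, path_succ, h2] at h
        cases hx : x i <;> cases hx' : x' i <;> simp [hx, hx'] at h ⊢

/-! ### A perfect almost disjoint family of generic sequences -/

theorem perfectAD {G : Type} (z : G) (Good : ℕ → ℕ → (ℕ → G) → Prop)
    (mono : ∀ j N N' w w', Good j N w → N ≤ N' → Agr N w' w → Good j N' w')
    (dense : ∀ j N w, ∃ N' w', N ≤ N' ∧ Agr N w' w ∧ Good j N' w') :
    ∃ W : (ℕ → Bool) → ℕ → G, (∀ x j, ∃ N, Good j N (W x)) ∧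
      ∀ x x', x ≠ x' → {i | W x i ≠ z ∧ W x' i ≠ z}.Finite := by
  classical
  have dense2 : ∀ n N w, ∃ N' w', N < N' ∧ Agr N w' w ∧ (∀ j < n, Good j N' w') ∧
      ∀ i, N' ≤ i → w' i = z := by
    intro n
    induction n with
    | zero =>
      intro N w
      refine ⟨N + 1, spl (N + 1) w (fun _ => z), Nat.lt_succ_self N,
        (agr_spl _ _ _).mono (Nat.le_succ N), fun j hj => absurd hj (Nat.not_lt_zero j), ?_⟩
      intro i hi; exact spl_ge hi
    | succ n ih =>
      intro N w
      obtain ⟨N1, w1, h1, h2, h3, h4⟩ := ih N w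
      obtain ⟨N2, w2, k1, k2, k3⟩ := dense n N1 w1
      refine ⟨N2, spl N2 w2 (fun _ => z), lt_of_lt_of_le h1 k1, ?_, ?_, fun i hi => spl_ge hi⟩
      · exact (((agr_spl N2 w2 _).mono k1).trans k2 |>.mono h1.le).trans h2
      · intro j hj
        rcases Nat.lt_succ_iff_lt_or_eq.mp hj with hj | rfl
        · exact mono j N1 N2 w1 _ (h3 j hj) k1 (((agr_spl N2 w2 _).mono k1).trans k2)
        · exact mono j N2 N2 w2 _ k3 le_rfl (agr_spl _ _ _)
  choose eN eW e1 e2 e3 e4 using dense2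
  -- state: current length, and table of sequences
  let st : ℕ → ℕ × (ℕ → ℕ → G) := fun n => Nat.rec (0, fun _ _ => z)
    (fun n s => (eN n s.1 (s.2 (n / 2)), Function.update s.2 n (eW n s.1 (s.2 (n / 2))))) n
  have st_succ : ∀ n, st (n + 1) = (eN n (st n).1 ((st n).2 (n / 2)),
      Function.update (st n).2 n (eW n (st n).1 ((st n).2 (n / 2)))) := fun n => rfl
  let L : ℕ → ℕ := fun n => (st n).1
  let f : ℕ → ℕ → G := fun n => (st (n + 1)).2 n
  have hst : ∀ n m, n < m → (st m).2 n = f n := by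
    intro n m hm
    induction m with
    | zero => omega
    | succ m ih =>
      rcases Nat.lt_succ_iff_lt_or_eq.mp hm with h | rfl
      · rw [st_succ]; simp only []
        rw [Function.update_of_ne (by omega), ih h]
      · rfl
  have hf : ∀ n, 0 < n → f n = eW n (L n) (f (n / 2)) ∧ L (n + 1) = eN n (L n) (f (n / 2)) := by
    intro n hn
    have h1 : (st n).2 (n / 2) = f (n / 2) := hst _ _ (by omega)
    constructor
    · show (st (n + 1)).2 n = _
      rw [st_succ]; simp only [Function.update_self]; rw [h1]
    · show (st (n + 1)).1 = _
      rw [st_succ]; simp only []; rw [h1]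
  have hLs : ∀ n, L n < L (n + 1) := by
    intro n
    show (st n).1 < (st (n + 1)).1
    rw [st_succ]; exact e1 _ _ _
  have hLm : StrictMono L := strictMono_nat_of_lt_succ hLs
  have hLge : ∀ n, n ≤ L n := hLm.id_le
  have hagr : ∀ n, 0 < n → Agr (L n) (f n) (f (n / 2)) := by
    intro n hn; rw [(hf n hn).1]; exact e2 _ _ _
  have hzero : ∀ n, 0 < n → ∀ i, L (n + 1) ≤ i → f n i = z := by
    intro n hn i hi; rw [(hf n hn).1]; apply e4; rw [← (hf n hn).2]; exact hi
  have hgood : ∀ n, 0 < n → ∀ j < n, Good j (L (n + 1)) (f n) := by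
    intro n hn j hj; rw [(hf n hn).1, (hf n hn).2]; exact e3 _ _ _ j hj
  have hpos : ∀ x k, 0 < path x k := fun x k => lt_of_le_of_lt (Nat.zero_le k) (path_gt x k)
  have hlt : ∀ x k, path x k + 1 ≤ path x (k + 1) := by
    intro x k; rw [path_succ]; have := hpos x k; omega
  let W : (ℕ → Bool) → ℕ → G := fun x i => f (path x i) i
  have hstep : ∀ x k l, k ≤ l → Agr (L (path x k + 1)) (f (path x l)) (f (path x k)) := by
    intro x k l hl
    induction l with
    | zero => obtain rfl : k = 0 := by omega
              exact Agr.refl _ _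
    | succ l ih =>
      rcases Nat.le_succ_iff.mp hl with h | rfl
      · have h1 := hagr (path x (l + 1)) (hpos _ _)
        rw [path_half] at h1
        refine (h1.mono ?_).trans (ih h)
        refine hLm.monotone (?_ : path x k + 1 ≤ path x (l + 1))
        have : path x k ≤ path x l := by
          have : Monotone (path x) := monotone_nat_of_le_succ
            (fun n => (Nat.le_succ _).trans (hlt x n))
          exact this h
        exact (Nat.succ_le_succ this).trans (hlt x l)
      · exact Agr.refl _ _
  have hW : ∀ x k, Agr (L (path x k + 1)) (W x) (f (path x k)) := by
    intro x k i hi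
    show f (path x i) i = f (path x k) i
    rcases le_total k i with h | h
    · exact hstep x k i h i hi
    · have : i < L (path x i + 1) :=
        lt_of_lt_of_le ((path_gt x i).trans (Nat.lt_succ_self _)) (hLge _)
      exact (hstep x i k h i this).symm
  -- nonzero only in blocks of the branch
  have hfnz : ∀ x k i, f (path x k) i ≠ z → i < L 1 ∨ ∃ l, l ≤ k ∧ L (path x l) ≤ i ∧ i < L (path x l + 1) := by
    intro x k
    induction k with
    | zero =>
      intro i hi
      by_cases h : i < L 1
      · exact Or.inl h
      · right
        refine ⟨0, le_rfl, not_lt.mp h, ?_⟩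
        by_contra hc
        exact hi (hzero _ (hpos x 0) i (not_lt.mp hc))
    | succ k ih =>
      intro i hi
      by_cases h : i < L (path x (k + 1))
      · have h1 := hagr (path x (k + 1)) (hpos _ _)
        rw [path_half] at h1
        rw [h1 i h] at hi
        rcases ih i hi with h | ⟨l, hl, h⟩
        · exact Or.inl h
        · exact Or.inr ⟨l, by omega, h⟩
      · right
        refine ⟨k + 1, le_rfl, not_lt.mp h, ?_⟩
        by_contra hc
        exact hi (hzero _ (hpos x _) i (not_lt.mp hc))
  have hWnz : ∀ x i, W x i ≠ z → i < L 1 ∨ ∃ l, L (path x l) ≤ i ∧ i < L (path x l + 1) := by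
    intro x i hi
    rcases hfnz x i i hi with h | ⟨l, _, h⟩
    · exact Or.inl h
    · exact Or.inr ⟨l, h⟩
  refine ⟨W, ?_, ?_⟩
  · intro x j
    have hj : j < path x j := path_gt x j
    exact ⟨_, mono j _ _ _ _ (hgood _ (hpos x j) j hj) le_rfl (hW x j)⟩
  · intro x x' hne
    obtain ⟨j, hj⟩ := Function.ne_iff.mp hne
    refine (Set.finite_lt_nat (L (path x j + 1) + L 1)).subset ?_
    rintro i ⟨hi, hi'⟩
    simp only [mem_ofPred_eq]
    rcases hWnz x i hi with h | ⟨l, hl1, hl2⟩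
    · omega
    rcases hWnz x' i hi' with h | ⟨l', hl1', hl2'⟩
    · omega
    have heq : path x l = path x' l' := by
      by_contra hne
      rcases Nat.lt_or_gt_of_ne hne with h | h
      · have := hLm.monotone (Nat.succ_le_of_lt h); simp only [Nat.succ_eq_add_one] at this; omega
      · have := hLm.monotone (Nat.succ_le_of_lt h); simp only [Nat.succ_eq_add_one] at this; omega
    obtain ⟨rfl, ha⟩ := path_inj heq
    have hlj : l ≤ j := by
      by_contra hc
      exact hj (ha j (not_le.mp hc))
    have : path x l ≤ path x j := by
      have : Monotone (path x) := monotone_nat_of_le_succ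
        (fun n => (Nat.le_succ _).trans (hlt x n))
      exact this hlj
    have := hLm.monotone (Nat.succ_le_succ this)
    simp only [Nat.succ_eq_add_one] at this
    omega

/-- Genericity with respect to one predicate on nodes. -/
def Gen {G : Type} (D : ℕ → (ℕ → G) → Prop) (w : ℕ → G) : Prop :=
  (∃ N, D N w) ∨ ∃ N, ∀ w' N', N ≤ N' → Agr N w' w → ¬ D N' w'

theorem genericAD {G : Type} [Countable G] (z : G) (DD : Set (ℕ → (ℕ → G) → Prop))
    (hDD : DD.Countable)
    (resp : ∀ D ∈ DD, ∀ N w w', D N w → Agr N w' w → D N w')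
    {Lab : Type} [Countable Lab] (Q : Lab → (ℕ → G) → Prop)
    (hQ : ∀ w, (∀ D ∈ DD, Gen D w) → ∃ l, Q l w) :
    ∃ l w, (∀ D ∈ DD, Gen D w) ∧ Q l w ∧ ∀ N, ∃ w', (∀ D ∈ DD, Gen D w') ∧ Q l w' ∧
      Agr N w' w ∧ {i | w i ≠ z ∧ w' i ≠ z}.Finite := by
  classical
  have hDD' : (insert (fun _ _ => True) DD).Countable := hDD.insert _
  obtain ⟨d, hd⟩ := hDD'.exists_eq_range ⟨_, Set.mem_insert _ _⟩
  have hdresp : ∀ j N w w', d j N w → Agr N w' w → d j N w' := by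
    intro j
    have : d j ∈ insert (fun _ _ => True) DD := by rw [hd]; exact ⟨j, rfl⟩
    rcases this with h | h
    · rw [h]; intros; trivial
    · exact resp _ h
  obtain ⟨W, hW1, hW2⟩ := perfectAD z
    (fun j N w => (∃ N1 ≤ N, d j N1 w) ∨ ∀ w' N', N ≤ N' → Agr N w' w → ¬ d j N' w')
    (by
      rintro j N N' w w' (⟨N1, h1, h2⟩ | h) hN ha
      · exact Or.inl ⟨N1, h1.trans hN, hdresp _ _ _ _ h2 (ha.mono h1)⟩
      · right
        intro w'' N'' h1 h2
        exact h w'' N'' (hN.trans h1) ((h2.mono hN).trans ha))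
    (by
      intro j N w
      by_cases h : ∃ w' N', N ≤ N' ∧ Agr N w' w ∧ d j N' w'
      · obtain ⟨w', N', h1, h2, h3⟩ := h
        exact ⟨N', w', h1, h2, Or.inl ⟨N', le_rfl, h3⟩⟩
      · push Not at h
        exact ⟨N, w, le_rfl, Agr.refl _ _, Or.inr h⟩)
  have hgen : ∀ x, ∀ D ∈ DD, Gen D (W x) := by
    intro x D hD
    have : D ∈ insert (fun _ _ => True) DD := Set.mem_insert_of_mem _ hD
    rw [hd] at this
    obtain ⟨j, rfl⟩ := this
    obtain ⟨N, h⟩ := hW1 x j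
    rcases h with ⟨N1, _, h⟩ | h
    · exact Or.inl ⟨N1, h⟩
    · exact Or.inr ⟨N, h⟩
  choose lab hlab using fun x => hQ (W x) (hgen x)
  suffices h : ∃ x, ∀ N, ∃ x', x' ≠ x ∧ lab x' = lab x ∧ Agr N (W x') (W x) by
    obtain ⟨x, hx⟩ := h
    refine ⟨lab x, W x, hgen x, hlab x, fun N => ?_⟩
    obtain ⟨x', h1, h2, h3⟩ := hx N
    exact ⟨W x', hgen x', h2 ▸ hlab x', h3, hW2 x x' h1.symm⟩
  by_contra hcon
  push Not at hcon
  choose NN hNN using hcon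
  have hinj : Function.Injective
      (fun x => (lab x, NN x, List.ofFn (fun i : Fin (NN x) => W x i)) :
        (ℕ → Bool) → Lab × ℕ × List G) := by
    intro x x' h
    simp only [Prod.mk.injEq] at h
    obtain ⟨h1, h2, h3⟩ := h
    by_contra hne
    refine hNN x x' (Ne.symm hne) h1.symm ?_
    intro i hi
    have e1 : (List.ofFn (fun i : Fin (NN x) => W x i))[i]? = some (W x i) := by
      simp [hi]
    have e2 : (List.ofFn (fun i : Fin (NN x') => W x' i))[i]? = some (W x' i) := by
      simp [← h2, hi]
    rw [h3, e2] at e1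
    exact Option.some.inj e1
  have hc : Countable (ℕ → Bool) := hinj.countable
  exact not_countable_bool hc

end OCAProof

namespace OCAProof

/-! ### Decisions and equivalence of nodes -/

section Core

variable {C : Type} (φ : (ℕ → C) → ℕ → Bool)

/-- The node `(N, s)` decides the value at `m` on `Q` to be `b`. -/
def Dec (Q : Set (ℕ → C)) (N : ℕ) (s : ℕ → C) (m : ℕ) (b : Bool) : Prop :=
  ∀ d ∈ Q, Agr N d s → φ d m = b

variable {φ}

theorem Dec.mono {Q : Set (ℕ → C)} {N N' : ℕ} {s s' : ℕ → C} {m : ℕ} {b : Bool}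
    (h : Dec φ Q N s m b) (hN : N ≤ N') (ha : Agr N s' s) : Dec φ Q N' s' m b :=
  fun d hd hda => h d hd ((hda.mono hN).trans ha)

theorem Dec.uniq {Q : Set (ℕ → C)} {N : ℕ} {s : ℕ → C} {m : ℕ} {b b' : Bool}
    (h : Dec φ Q N s m b) (h' : Dec φ Q N s m b') (hne : ∃ d ∈ Q, Agr N d s) : b = b' := by
  obtain ⟨d, hd, ha⟩ := hne
  rw [← h d hd ha, ← h' d hd ha]

variable (φ)

/-- Every value at `m` can be decided on `Q` by going to a longer node. -/
def Decidable1 (Q : Set (ℕ → C)) : Prop :=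
  ∀ m N c, ∃ c' N', N ≤ N' ∧ Agr N c' c ∧ ∃ b, Dec φ Q N' c' m b

/-- Equivalence of two nodes of length `L`. -/
def Eqv (Q : Set (ℕ → C)) (L : ℕ) (s s' : ℕ → C) : Prop :=
  ∀ m N t t' b, L ≤ N → Agr L t s → Agr L t' s' → (∀ i, L ≤ i → t i = t' i) →
    Dec φ Q N t m b → Dec φ Q N t' m (!b) → False

variable {φ}

theorem Eqv.symm {Q : Set (ℕ → C)} {L : ℕ} {s s' : ℕ → C} (h : Eqv φ Q L s s') :
    Eqv φ Q L s' s := by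
  intro m N t t' b hN ht ht' he hd hd'
  exact h m N t' t (!b) hN ht' ht (fun i hi => (he i hi).symm) hd' (by simpa using hd)

theorem Eqv.congr {Q : Set (ℕ → C)} {L : ℕ} {s s' s1 s1' : ℕ → C} (h : Eqv φ Q L s s')
    (h1 : Agr L s1 s) (h2 : Agr L s1' s') : Eqv φ Q L s1 s1' := by
  intro m N t t' b hN ht ht' he hd hd'
  exact h m N t t' b hN (ht.trans h1) (ht'.trans h2) he hd hd'

theorem Eqv.mono {Q : Set (ℕ → C)} {L N : ℕ} {s s' : ℕ → C} (h : Eqv φ Q L s s')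
    (hN : L ≤ N) (he : ∀ i, L ≤ i → i < N → s i = s' i) : Eqv φ Q N s s' := by
  intro m N' t t' b hN' ht ht' he' hd hd'
  refine h m N' t t' b (hN.trans hN') (ht.mono hN) (ht'.mono hN) ?_ hd hd'
  intro i hi
  rcases lt_or_ge i N with h1 | h1
  · rw [ht i h1, ht' i h1, he i hi h1]
  · exact he' i h1

theorem Eqv.rfl' {Q : Set (ℕ → C)} {N : ℕ} {s : ℕ → C}
    (hd : ∀ t M, Agr N t s → ∃ d ∈ Q, Agr M d t) : Eqv φ Q N s s := by
  intro m N' t t' b hN' ht ht' he h1 h2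
  have : t = t' := by
    funext i
    rcases lt_or_ge i N with h | h
    · rw [ht i h, ht' i h]
    · exact he i h
  subst this
  have := h1.uniq h2 (hd t N' ht)
  cases b <;> simp at this

theorem Eqv.transfer {Q : Set (ℕ → C)} {L N m : ℕ} {s s' u u' : ℕ → C} {b : Bool}
    (hdec : Decidable1 φ Q) (h : Eqv φ Q L s s') (hL : L ≤ N) (hu : Agr L u s)
    (hu' : Agr L u' s') (he : ∀ j, L ≤ j → j < N → u j = u' j) (hd : Dec φ Q N u' m b) :
    ∃ v N', N ≤ N' ∧ Agr N v u ∧ Dec φ Q N' v m b := by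
  obtain ⟨v, N', h1, h2, b1, h3⟩ := hdec m N u
  refine ⟨v, N', h1, h2, ?_⟩
  by_cases hb : b1 = b
  · exact hb ▸ h3
  exfalso
  have hb' : b = !b1 := by cases b <;> cases b1 <;> simp_all
  subst hb'
  refine h m N' v (spl N u' v) b1 (hL.trans h1) ((h2.mono hL).trans hu)
    (((agr_spl N u' v).mono hL).trans hu') ?_ h3 (hd.mono h1 (agr_spl _ _ _))
  intro i hi
  rcases lt_or_ge i N with h | h
  · rw [spl_lt h, h2 i h, he i hi h]
  · rw [spl_ge h]

theorem Eqv.trans {Q : Set (ℕ → C)} {L : ℕ} {s s' s'' : ℕ → C}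
    (hdec : Decidable1 φ Q) (h : Eqv φ Q L s s') (h' : Eqv φ Q L s' s'') : Eqv φ Q L s s'' := by
  intro m N t t'' b hN ht ht'' he hd hd''
  obtain ⟨v, N', h1, h2, h3⟩ := h.symm.transfer (u := spl L s' t) (u' := t) hdec hN
    (agr_spl _ _ _) ht (fun j hj _ => spl_ge hj) hd
  refine h' m N' v (spl N t'' v) b (hN.trans h1) ((h2.mono hN).trans (agr_spl _ _ _))
    (((agr_spl _ _ _).mono hN).trans ht'') ?_ h3 (hd''.mono h1 (agr_spl _ _ _))
  intro i hi
  rcases lt_or_ge i N with h | h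
  · rw [spl_lt h, h2 i h, spl_ge hi, he i hi]
  · rw [spl_ge h]

/-! ### Letters -/

/-- The alphabet. -/
abbrev Gam (C : Type) : Type := C × C × Option (C × ℕ) × C

def cc (w : ℕ → Gam C) : ℕ → C := fun i => (w i).1
def aa (w : ℕ → Gam C) : ℕ → C := fun i => (w i).2.1
def yy (w : ℕ → Gam C) : ℕ → Option (C × ℕ) := fun i => (w i).2.2.1
def ee (w : ℕ → Gam C) : ℕ → C := fun i => (w i).2.2.2

open Classical in
def rl (top : C) (g : Gam C) : C := if g.1 = g.2.1 ∧ g.2.2.1 = none then g.2.2.2 else top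

def rr (top : C) (w : ℕ → Gam C) : ℕ → C := fun i => rl top (w i)

/-- Completeness of a node. -/
def Cpl (N : ℕ) (w : ℕ → Gam C) : Prop := ∀ i < N, ∀ v L, yy w i = some (v, L) → L ≤ N

theorem Agr.cc {N : ℕ} {w w' : ℕ → Gam C} (h : Agr N w w') : Agr N (cc w) (cc w') :=
  fun i hi => by simp only [OCAProof.cc, h i hi]
theorem Agr.aa {N : ℕ} {w w' : ℕ → Gam C} (h : Agr N w w') : Agr N (aa w) (aa w') :=
  fun i hi => by simp only [OCAProof.aa, h i hi]
theorem Agr.yy {N : ℕ} {w w' : ℕ → Gam C} (h : Agr N w w') : Agr N (yy w) (yy w') :=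
  fun i hi => by simp only [OCAProof.yy, h i hi]
theorem Agr.ee {N : ℕ} {w w' : ℕ → Gam C} (h : Agr N w w') : Agr N (ee w) (ee w') :=
  fun i hi => by simp only [OCAProof.ee, h i hi]
theorem Agr.rr {top : C} {N : ℕ} {w w' : ℕ → Gam C} (h : Agr N w w') :
    Agr N (rr top w) (rr top w') :=
  fun i hi => congrArg (rl top) (h i hi)

theorem rr_top {top : C} {w : ℕ → Gam C} {i : ℕ} (h : ee w i = top) : rr top w i = top := by
  unfold rr rl; split_ifs
  · exact h
  · rfl

theorem Cpl.agr {N : ℕ} {w w' : ℕ → Gam C} (h : Cpl N w) (ha : Agr N w' w) : Cpl N w' := by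
  intro i hi v L hy
  rw [ha.yy i hi] at hy
  exact h i hi v L hy

theorem Cpl.spl {N N' : ℕ} {w q : ℕ → Gam C} (h : Cpl N w) (hq : ∀ i, N ≤ i → yy q i = none)
    (hN : N ≤ N') : Cpl N' (spl N w q) := by
  intro i hi v L hy
  rcases lt_or_ge i N with h1 | h1
  · rw [(agr_spl N w q).yy i h1] at hy
    exact (h i h1 v L hy).trans hN
  · have : yy (OCAProof.spl N w q) i = yy q i := by simp only [yy, spl_ge h1]
    rw [this, hq i h1] at hy
    cases hy

theorem cc_spl (N : ℕ) (w q : ℕ → Gam C) : cc (spl N w q) = spl N (cc w) (cc q) := by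
  funext i; by_cases h : i < N <;> simp [cc, spl, h]
theorem aa_spl (N : ℕ) (w q : ℕ → Gam C) : aa (spl N w q) = spl N (aa w) (aa q) := by
  funext i; by_cases h : i < N <;> simp [aa, spl, h]
theorem yy_spl (N : ℕ) (w q : ℕ → Gam C) : yy (spl N w q) = spl N (yy w) (yy q) := by
  funext i; by_cases h : i < N <;> simp [yy, spl, h]
theorem rr_spl (top : C) (N : ℕ) (w q : ℕ → Gam C) :
    rr top (spl N w q) = spl N (rr top w) (rr top q) := by
  funext i; by_cases h : i < N <;> simp [rr, spl, h]

/-! ### The transformation -/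

variable (φ)

open Classical in
/-- The new value at `i`. -/
def nv (Q : Set (ℕ → C)) (k i : ℕ) (s : ℕ → C) : Option (C × ℕ) → C
  | none => s i
  | some (v, L) => if k ≤ i ∧ i < L ∧ Eqv φ Q L (Function.update s i v) s then v else s i

def gs (Q : Set (ℕ → C)) (k : ℕ) (w : ℕ → Gam C) : ℕ → ℕ → C
  | 0 => cc w
  | i + 1 => Function.update (gs Q k w i) i (nv φ Q k i (gs Q k w i) (yy w i))

def Th (Q : Set (ℕ → C)) (k : ℕ) (w : ℕ → Gam C) : ℕ → C := fun i => gs φ Q k w (i + 1) i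

variable {φ}

theorem gs_ge (Q : Set (ℕ → C)) (k : ℕ) (w : ℕ → Gam C) (i j : ℕ) (h : i ≤ j) :
    gs φ Q k w i j = cc w j := by
  induction i with
  | zero => rfl
  | succ i ih =>
    rw [gs, Function.update_of_ne (by omega), ih (by omega)]

theorem gs_lt (Q : Set (ℕ → C)) (k : ℕ) (w : ℕ → Gam C) (i j : ℕ) (h : j < i) :
    gs φ Q k w i j = Th φ Q k w j := by
  induction i with
  | zero => omega
  | succ i ih =>
    rcases Nat.lt_succ_iff_lt_or_eq.mp h with h1 | rfl
    · rw [gs, Function.update_of_ne (by omega), ih h1]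
    · rfl

theorem gs_eq (Q : Set (ℕ → C)) (k : ℕ) (w : ℕ → Gam C) (i : ℕ) :
    gs φ Q k w i = spl i (Th φ Q k w) (cc w) := by
  funext j
  rcases lt_or_ge j i with h | h
  · rw [spl_lt h, gs_lt _ _ _ _ _ h]
  · rw [spl_ge h, gs_ge _ _ _ _ _ h]

theorem Th_eq (Q : Set (ℕ → C)) (k : ℕ) (w : ℕ → Gam C) (i : ℕ) :
    Th φ Q k w i = nv φ Q k i (gs φ Q k w i) (yy w i) := by
  simp [Th, gs]

theorem Th_none {Q : Set (ℕ → C)} {k : ℕ} {w : ℕ → Gam C} {i : ℕ} (h : yy w i = none) :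
    Th φ Q k w i = cc w i := by
  rw [Th_eq, h, nv, gs_ge _ _ _ _ _ le_rfl]

theorem Th_low {Q : Set (ℕ → C)} {k : ℕ} {w : ℕ → Gam C} {i : ℕ} (h : i < k) :
    Th φ Q k w i = cc w i := by
  rw [Th_eq]
  rcases yy w i with _ | ⟨v, L⟩
  · rw [nv, gs_ge _ _ _ _ _ le_rfl]
  · rw [nv, if_neg (by omega), gs_ge _ _ _ _ _ le_rfl]

theorem gs_agr {Q : Set (ℕ → C)} {k N : ℕ} {w w' : ℕ → Gam C} (hc : Cpl N w) (ha : Agr N w w')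
    (i : ℕ) (hi : i ≤ N) : Agr N (gs φ Q k w i) (gs φ Q k w' i) := by
  induction i with
  | zero => exact ha.cc
  | succ i ih =>
    have ih := ih (by omega)
    have hv : nv φ Q k i (gs φ Q k w i) (yy w i) = nv φ Q k i (gs φ Q k w' i) (yy w' i) := by
      rw [← ha.yy i (by omega)]
      rcases hy : yy w i with _ | ⟨v, L⟩
      · exact ih i (by omega)
      · have hL : L ≤ N := hc i (by omega) v L hy
        have hup : Agr N (Function.update (gs φ Q k w i) i v)
            (Function.update (gs φ Q k w' i) i v) := by
          intro j hj
          by_cases hji : j = i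
          · subst hji; simp
          · simp [Function.update_of_ne hji, ih j hj]
        have : Eqv φ Q L (Function.update (gs φ Q k w i) i v) (gs φ Q k w i) ↔
            Eqv φ Q L (Function.update (gs φ Q k w' i) i v) (gs φ Q k w' i) :=
          ⟨fun h => h.congr (hup.symm.mono hL) (ih.symm.mono hL),
            fun h => h.congr (hup.mono hL) (ih.mono hL)⟩
        have hii := ih i (by omega)
        by_cases hE : k ≤ i ∧ i < L ∧ Eqv φ Q L (Function.update (gs φ Q k w i) i v) (gs φ Q k w i)
        · have hE' := hE
          rw [this] at hE'
          rw [nv, nv, if_pos hE, if_pos hE']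
        · have hE' := hE
          rw [this] at hE'
          rw [nv, nv, if_neg hE, if_neg hE', hii]
    intro j hj
    rw [gs, gs, hv]
    by_cases hji : j = i
    · subst hji; simp
    · simp [Function.update_of_ne hji, ih j hj]

theorem Th_agr {Q : Set (ℕ → C)} {k N : ℕ} {w w' : ℕ → Gam C} (hc : Cpl N w) (ha : Agr N w w') :
    Agr N (Th φ Q k w) (Th φ Q k w') :=
  fun i hi => gs_agr hc ha (i + 1) hi i hi

theorem Th_spl {Q : Set (ℕ → C)} {k N : ℕ} {w q : ℕ → Gam C} (hc : Cpl N w)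
    (hq : ∀ i, N ≤ i → yy q i = none) :
    Th φ Q k (spl N w q) = spl N (Th φ Q k w) (cc q) := by
  funext i
  rcases lt_or_ge i N with h | h
  · rw [spl_lt h]; exact (Th_agr hc (agr_spl N w q).symm i h).symm
  · rw [spl_ge h, Th_none, cc_spl, spl_ge h]
    rw [yy_spl, spl_ge h, hq i h]

/-- The set `Q` is dense below the node `(k, c)`. -/
def Dns (Q : Set (ℕ → C)) (k : ℕ) (c : ℕ → C) : Prop :=
  ∀ s N, Agr k s c → ∃ d ∈ Q, Agr N d s

theorem gs_eqv {Q : Set (ℕ → C)} {k N : ℕ} {w : ℕ → Gam C} (hdec : Decidable1 φ Q)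
    (hc : Cpl N w) (hk : k ≤ N) (hD : Dns Q k (cc w)) : Eqv φ Q N (cc w) (gs φ Q k w N) := by
  have : ∀ i, i ≤ N → Eqv φ Q N (cc w) (gs φ Q k w i) := by
    intro i
    induction i with
    | zero => intro _; exact Eqv.rfl' fun t M ht => hD t M (ht.mono hk)
    | succ i ih =>
      intro hi
      have ih := ih (by omega)
      by_cases h : gs φ Q k w (i + 1) = gs φ Q k w i
      · rw [h]; exact ih
      · refine ih.trans hdec ?_
        have hg : gs φ Q k w (i + 1) = Function.update (gs φ Q k w i) i (nv φ Q k i (gs φ Q k w i) (yy w i)) := rfl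
        rcases hy : yy w i with _ | ⟨v, L⟩
        · rw [hy, nv, Function.update_eq_self] at hg
          exact absurd hg h
        · rw [hy, nv] at hg
          split_ifs at hg with hcond
          · rw [hg]
            refine hcond.2.2.symm.mono (hc i (by omega) v L hy) ?_
            intro j hj _
            rw [Function.update_of_ne (by omega)]
          · rw [Function.update_eq_self] at hg
            exact absurd hg h
  exact this N le_rfl

end Core

end OCAProof

namespace OCAProof

section Core2

variable {C : Type}

/-- The hypotheses of the core theorem. -/
structure Hyp (bot top : C) (φ : (ℕ → C) → ℕ → Bool) (P : ℕ → Set (ℕ → C)) : Prop where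
  hcov : ∀ c, ∃ n, c ∈ P n
  h1 : ∀ c c' r : ℕ → C, (∀ i, c i ≠ c' i → r i = top) →
    {m | φ c m ≠ φ c' m ∧ φ r m = false}.Finite
  h2 : ∀ r r' : ℕ → C, {i | r i ≠ bot ∧ r' i ≠ bot}.Finite →
    {m | φ r m = true ∧ φ r' m = true}.Finite
  h3 : ∀ c c' : ℕ → C, {i | c i ≠ c' i}.Infinite → {m | φ c m ≠ φ c' m}.Infinite
  hdec : ∀ k, Decidable1 φ (P k)

/-- Labels. -/
structure Lbl where
  n0 : ℕ
  k : ℕ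
  n1 : ℕ
  n2 : ℕ
  n4 : ℕ
  M : ℕ

instance : Countable Lbl := by
  have : Function.Injective (fun l : Lbl => (l.n0, l.k, l.n1, l.n2, l.n4, l.M)) := by
    rintro ⟨⟩ ⟨⟩ h
    simpa using h
  exact this.countable

variable (top : C) (φ : (ℕ → C) → ℕ → Bool) (P : ℕ → Set (ℕ → C))

/-- `w` carries the label `l`. -/
structure RR (l : Lbl) (w : ℕ → Gam C) : Prop where
  c0 : cc w ∈ P l.n0
  dn : Dns (P l.n0) l.k (cc w)
  a1 : aa w ∈ P l.n1
  r2 : rr top w ∈ P l.n2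
  t4 : Th φ (P l.n0) l.k w ∈ P l.n4
  hm : ∀ m, l.M ≤ m → φ (rr top w) m = false →
    φ (cc w) m = φ (aa w) m ∧ φ (cc w) m = φ (Th φ (P l.n0) l.k w) m

/-- The projections whose values get decided. -/
def pr : Option (Option (ℕ × ℕ)) → (ℕ → Gam C) → ℕ → C
  | none, w => cc w
  | some none, w => rr top w
  | some (some (n, k)), w => Th φ (P n) k w

/-- Extension of a node by a sequence. -/
def ex (N : ℕ) (w : ℕ → Gam C) (s : ℕ → C) : ℕ → Gam C :=
  spl N w (fun i => (s i, s i, none, s i))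

variable {φ P}

theorem pr_agr (j) {N : ℕ} {w w' : ℕ → Gam C} (hc : Cpl N w) (ha : Agr N w w') :
    Agr N (pr top φ P j w) (pr top φ P j w') := by
  rcases j with _ | _ | ⟨n, k⟩
  · exact ha.cc
  · exact ha.rr
  · exact Th_agr hc ha

theorem pr_ex (j) {N : ℕ} {w : ℕ → Gam C} {s : ℕ → C} (hc : Cpl N w)
    (hs : Agr N s (pr top φ P j w)) : pr top φ P j (ex N w s) = s := by
  have key : ∀ u : ℕ → C, Agr N s u → spl N u s = s := by
    intro u hu
    funext i
    rcases lt_or_ge i N with h | h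
    · rw [spl_lt h, hu i h]
    · rw [spl_ge h]
  rcases j with _ | _ | ⟨n, k⟩
  · show cc (ex N w s) = s
    rw [ex, cc_spl]; exact key _ hs
  · show rr top (ex N w s) = s
    rw [ex, rr_spl]
    have : rr top (fun i => ((s i, s i, none, s i) : Gam C)) = s := by
      funext i; simp [rr, rl]
    rw [this]; exact key _ hs
  · show Th φ (P n) k (ex N w s) = s
    rw [ex, Th_spl hc (fun i _ => rfl)]; exact key _ hs

theorem ex_cpl {N N' : ℕ} {w : ℕ → Gam C} (s : ℕ → C) (hc : Cpl N w) (h : N ≤ N') :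
    Cpl N' (ex N w s) := hc.spl (fun _ _ => rfl) h

variable (φ P)

def D1 (l : Lbl) (N : ℕ) (w : ℕ → Gam C) : Prop := ¬ ∃ ρ, RR top φ P l ρ ∧ Agr N ρ w
def D2 (n : ℕ) (N : ℕ) (w : ℕ → Gam C) : Prop := ¬ ∃ d ∈ P n, Agr N d (cc w)
def D3 (K : ℕ) (N : ℕ) (w : ℕ → Gam C) : Prop := ∃ i, K ≤ i ∧ i < N ∧ ee w i = top
def D4 (K : ℕ) (N : ℕ) (w : ℕ → Gam C) : Prop := K ≤ N ∧ Cpl N w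
def D5 (p : ℕ × ℕ × ℕ) (N : ℕ) (w : ℕ → Gam C) : Prop :=
  Cpl N w ∧ ∃ i, p.2.2 ≤ i ∧ i < N ∧ Th φ (P p.1) p.2.1 w i ≠ cc w i
def D6 (p : Option (Option (ℕ × ℕ)) × ℕ × ℕ) (N : ℕ) (w : ℕ → Gam C) : Prop :=
  Cpl N w ∧ ∃ b, Dec φ (P p.2.1) N (pr top φ P p.1 w) p.2.2 b

def DD : Set (ℕ → (ℕ → Gam C) → Prop) :=
  range (D1 top φ P) ∪ range (D2 P) ∪ range (D3 top) ∪ range D4 ∪ range (D5 φ P) ∪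
    range (D6 top φ P)

theorem DD_countable : (DD top φ P).Countable := by
  unfold DD
  refine Set.Countable.union (Set.Countable.union (Set.Countable.union (Set.Countable.union
    (Set.Countable.union ?_ ?_) ?_) ?_) ?_) ?_ <;> exact Set.countable_range _

theorem DD_resp : ∀ D ∈ DD top φ P, ∀ N w w', D N w → Agr N w' w → D N w' := by
  rintro D (((((⟨l, rfl⟩ | ⟨n, rfl⟩) | ⟨K, rfl⟩) | ⟨K, rfl⟩) | ⟨p, rfl⟩) | ⟨p, rfl⟩) N w w' h ha
  · rintro ⟨ρ, h1, h2⟩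
    exact h ⟨ρ, h1, h2.trans ha⟩
  · rintro ⟨ρ, h1, h2⟩
    exact h ⟨ρ, h1, h2.trans ha.cc⟩
  · obtain ⟨i, h1, h2, h3⟩ := h
    exact ⟨i, h1, h2, (ha.ee i h2).trans h3⟩
  · exact ⟨h.1, h.2.agr ha⟩
  · obtain ⟨hc, i, h1, h2, h3⟩ := h
    refine ⟨hc.agr ha, i, h1, h2, ?_⟩
    rw [ha.cc i h2, ← Th_agr hc ha.symm i h2]
    exact h3
  · obtain ⟨hc, b, h1⟩ := h
    exact ⟨hc.agr ha, b, h1.mono le_rfl (pr_agr top p.1 hc ha.symm).symm⟩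

/-- Generic sequences. -/
def Gnr (w : ℕ → Gam C) : Prop := ∀ D ∈ DD top φ P, Gen D w

variable {top φ P}

theorem Gnr.cpl {w : ℕ → Gam C} (h : Gnr top φ P w) (K : ℕ) : ∃ N, K ≤ N ∧ Cpl N w := by
  have := h (D4 K) (by unfold DD; simp)
  rcases this with h | ⟨N, h⟩
  · exact h
  exfalso
  have : ∀ N1, ∃ B, ∀ i < N1, ∀ v L, yy w i = some (v, L) → L ≤ B := by
    intro N1
    induction N1 with
    | zero => exact ⟨0, fun i hi => absurd hi (Nat.not_lt_zero i)⟩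
    | succ n ih =>
      obtain ⟨B, hB⟩ := ih
      rcases hy : yy w n with _ | ⟨v, L⟩
      · refine ⟨B, fun i hi v L hL => ?_⟩
        rcases Nat.lt_succ_iff_lt_or_eq.mp hi with h | rfl
        · exact hB i h v L hL
        · rw [hy] at hL; cases hL
      · refine ⟨max B L, fun i hi v' L' hL => ?_⟩
        rcases Nat.lt_succ_iff_lt_or_eq.mp hi with h | rfl
        · exact (hB i h v' L' hL).trans (le_max_left _ _)
        · rw [hy] at hL; cases hL; exact le_max_right _ _
  obtain ⟨B, hB⟩ := this N
  refine h (ex N w (cc w)) (max B (max N K)) (by omega) (agr_spl _ _ _) ⟨by omega, ?_⟩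
  intro i hi v L hL
  rw [ex, yy_spl] at hL
  rcases lt_or_ge i N with h | h
  · rw [spl_lt h] at hL
    exact (hB i h v L hL).trans (le_max_left _ _)
  · rw [spl_ge h] at hL
    cases hL

theorem Gnr.exTop {w : ℕ → Gam C} (h : Gnr top φ P w) (K : ℕ) : ∃ i, K ≤ i ∧ ee w i = top := by
  have := h (D3 top K) (by unfold DD; simp)
  rcases this with ⟨N, i, h1, h2, h3⟩ | ⟨N, h⟩
  · exact ⟨i, h1, h3⟩
  exfalso
  refine h (ex N w (fun _ => top)) (max N K + 1) (by omega) (agr_spl _ _ _)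
    ⟨max N K, le_max_right _ _, Nat.lt_succ_self _, ?_⟩
  simp only [ee, ex, spl_ge (le_max_left N K)]

theorem Gnr.dec {bot : C} (H : Hyp bot top φ P) {w : ℕ → Gam C} (h : Gnr top φ P w) (j)
    {n : ℕ} (hp : pr top φ P j w ∈ P n) (m : ℕ) :
    ∃ N, Dec φ (P n) N (pr top φ P j w) m (φ (pr top φ P j w) m) := by
  have := h (D6 top φ P (j, n, m)) (by unfold DD; simp)
  rcases this with ⟨N, hc, b, hb⟩ | ⟨N, hN⟩
  · refine ⟨N, ?_⟩
    have := hb _ hp (Agr.refl _ _)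
    simp only at this hb
    rw [this]; exact hb
  exfalso
  obtain ⟨N1, h1, h2⟩ := h.cpl N
  obtain ⟨s, N', h3, h4, b, h5⟩ := H.hdec n m N1 (pr top φ P j w)
  refine hN (ex N1 w s) N' (h1.trans h3) ((agr_spl _ _ _).mono h1) ⟨ex_cpl s h2 h3, b, ?_⟩
  simp only
  rw [pr_ex top j h2 h4]
  exact h5

theorem Gnr.label {bot : C} (H : Hyp bot top φ P) {w : ℕ → Gam C} (h : Gnr top φ P w) :
    ∃ l, RR top φ P l w := by
  obtain ⟨n0, hn0⟩ := H.hcov (cc w)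
  have : ∃ k, Dns (P n0) k (cc w) := by
    have := h (D2 P n0) (by unfold DD; simp)
    rcases this with ⟨N, hN⟩ | ⟨k, hk⟩
    · exact absurd ⟨cc w, hn0, Agr.refl _ _⟩ hN
    · refine ⟨k, fun s N hs => ?_⟩
      have := hk (ex k w s) (max N k) (le_max_right _ _) (agr_spl _ _ _)
      unfold D2 at this
      rw [not_not] at this
      obtain ⟨d, hd, hda⟩ := this
      refine ⟨d, hd, (hda.mono (le_max_left _ _)).trans ?_⟩
      intro i _
      rw [ex, cc_spl]
      rcases lt_or_ge i k with h | h
      · rw [spl_lt h, hs i h]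
      · rw [spl_ge h]; rfl
  obtain ⟨k, hk⟩ := this
  obtain ⟨n1, hn1⟩ := H.hcov (aa w)
  obtain ⟨n2, hn2⟩ := H.hcov (rr top w)
  obtain ⟨n4, hn4⟩ := H.hcov (Th φ (P n0) k w)
  have f1 := H.h1 (cc w) (aa w) (rr top w) (by
    intro i hi
    unfold rr rl
    rw [if_neg]
    exact fun hh => hi hh.1)
  have f2 := H.h1 (cc w) (Th φ (P n0) k w) (rr top w) (by
    intro i hi
    unfold rr rl
    rw [if_neg]
    exact fun hh => hi (Th_none hh.2).symm)
  obtain ⟨M, hM⟩ := (f1.union f2).bddAbove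
  refine ⟨⟨n0, k, n1, n2, n4, M + 1⟩, hn0, hk, hn1, hn2, hn4, ?_⟩
  intro m hm hr
  simp only at hm ⊢
  constructor
  · by_contra hne
    have := hM (Or.inl ⟨hne, hr⟩)
    omega
  · by_contra hne
    have := hM (Or.inr ⟨hne, hr⟩)
    omega

end Core2

end OCAProof

namespace OCAProof

section Core3

variable {C : Type}

/-- The situation in the main argument. -/
structure Ctx (bot top : C) (φ : (ℕ → C) → ℕ → Bool) (P : ℕ → Set (ℕ → C)) (l : Lbl)
    (w : ℕ → Gam C) (N0 : ℕ) : Prop where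
  H : Hyp bot top φ P
  g : Gnr top φ P w
  R : RR top φ P l w
  cpl : Cpl N0 w
  kN : l.k ≤ N0
  rich : ∀ w' N, N0 ≤ N → Agr N0 w' w → ∃ ρ, RR top φ P l ρ ∧ Agr N ρ w'
  part : ∀ N, ∃ e, Gnr top φ P e ∧ RR top φ P l e ∧ Agr N e w ∧
    {m | φ (rr top w) m = true ∧ φ (rr top e) m = true}.Finite

variable {bot top : C} {φ : (ℕ → C) → ℕ → Bool} {P : ℕ → Set (ℕ → C)} {l : Lbl}
    {w : ℕ → Gam C} {N0 : ℕ}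

theorem Ctx.link1 (X : Ctx bot top φ P l w N0) {e : ℕ → Gam C} (ge : Gnr top φ P e)
    (re : RR top φ P l e) (he : Agr N0 e w) {s t : ℕ → C} {N m : ℕ} {b : Bool}
    (hs : Agr N0 s (cc w)) (ht : Agr N0 t (aa w))
    (hst : ∀ i, N0 ≤ i → s i ≠ t i → rr top e i = top)
    (hd : Dec φ (P l.n0) N s m b) (hd' : Dec φ (P l.n1) N t m (!b)) (hm : l.M ≤ m) :
    φ (rr top e) m = true := by
  by_contra hf
  rw [Bool.not_eq_true] at hf
  obtain ⟨N2, h2⟩ := ge.dec X.H (some none) re.r2 m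
  change Dec φ (P l.n2) N2 (rr top e) m (φ (rr top e) m) at h2
  rw [hf] at h2
  let q : ℕ → Gam C := fun i => (s i, t i, none, rr top e i)
  obtain ⟨ρ, hρ, ha⟩ := X.rich (spl N0 w q) (max N (max N2 N0)) (by omega) (agr_spl _ _ _)
  have e1 : cc (spl N0 w q) = s := by
    rw [cc_spl]; funext i
    rcases lt_or_ge i N0 with h | h
    · rw [spl_lt h, hs i h]
    · rw [spl_ge h]; rfl
  have e2 : aa (spl N0 w q) = t := by
    rw [aa_spl]; funext i
    rcases lt_or_ge i N0 with h | h
    · rw [spl_lt h, ht i h]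
    · rw [spl_ge h]; rfl
  have e3 : rr top (spl N0 w q) = rr top e := by
    rw [rr_spl]; funext i
    rcases lt_or_ge i N0 with h | h
    · rw [spl_lt h, he.rr i h]
    · rw [spl_ge h]
      by_cases hi : s i = t i
      · simp [rr, rl, q, hi]
      · rw [hst i h hi]; simp [rr, rl, q, hi]
  have f1 := hd _ hρ.c0 (by have := ha.cc; rw [e1] at this; exact this.mono (by omega))
  have f2 := hd' _ hρ.a1 (by have := ha.aa; rw [e2] at this; exact this.mono (by omega))
  have f3 := h2 _ hρ.r2 (by have := ha.rr (top := top); rw [e3] at this; exact this.mono (by omega))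
  have := (hρ.hm m hm f3).1
  rw [f1, f2] at this
  cases b <;> simp at this

theorem Ctx.link2 (X : Ctx bot top φ P l w N0) {e : ℕ → Gam C} (ge : Gnr top φ P e)
    (re : RR top φ P l e) (he : Agr N0 e w) {s : ℕ → C} {N m : ℕ} {b : Bool}
    (hs : Agr N0 s (cc w))
    (hd : Dec φ (P l.n0) N s m b)
    (hd' : Dec φ (P l.n4) N (spl N0 (Th φ (P l.n0) l.k w) s) m (!b)) (hm : l.M ≤ m) :
    φ (rr top e) m = true := by
  by_contra hf
  rw [Bool.not_eq_true] at hf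
  obtain ⟨N2, h2⟩ := ge.dec X.H (some none) re.r2 m
  change Dec φ (P l.n2) N2 (rr top e) m (φ (rr top e) m) at h2
  rw [hf] at h2
  let q : ℕ → Gam C := fun i => (s i, s i, none, rr top e i)
  obtain ⟨ρ, hρ, ha⟩ := X.rich (spl N0 w q) (max N (max N2 N0)) (by omega) (agr_spl _ _ _)
  have e1 : cc (spl N0 w q) = s := by
    rw [cc_spl]; funext i
    rcases lt_or_ge i N0 with h | h
    · rw [spl_lt h, hs i h]
    · rw [spl_ge h]; rfl
  have e2 : Th φ (P l.n0) l.k (spl N0 w q) = spl N0 (Th φ (P l.n0) l.k w) s :=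
    Th_spl X.cpl (fun _ _ => rfl)
  have e3 : rr top (spl N0 w q) = rr top e := by
    rw [rr_spl]; funext i
    rcases lt_or_ge i N0 with h | h
    · rw [spl_lt h, he.rr i h]
    · rw [spl_ge h]; simp [rr, rl, q]
  have hc : Cpl (max N (max N2 N0)) (spl N0 w q) := X.cpl.spl (fun _ _ => rfl) (by omega)
  have f1 := hd _ hρ.c0 (by have := ha.cc; rw [e1] at this; exact this.mono (by omega))
  have f2 := hd' _ hρ.t4 (by
    have := (Th_agr (φ := φ) (Q := P l.n0) (k := l.k) hc ha.symm).symm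
    rw [e2] at this; exact this.mono (by omega))
  have f3 := h2 _ hρ.r2 (by have := ha.rr (top := top); rw [e3] at this; exact this.mono (by omega))
  have := (hρ.hm m hm f3).2
  rw [f1, f2] at this
  cases b <;> simp at this

/-- The set of `m` that can be influenced at `i`. -/
def BB (φ : (ℕ → C) → ℕ → Bool) (Q : Set (ℕ → C)) (c : ℕ → C) (N0 i : ℕ) : Set ℕ :=
  {m | ∃ N s s' b, N0 ≤ N ∧ Agr N0 s c ∧ Agr N0 s' c ∧ (∀ j, j ≠ i → s j = s' j) ∧
    Dec φ Q N s m b ∧ Dec φ Q N s' m (!b)}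

theorem Ctx.BB_finite (X : Ctx bot top φ P l w N0) {i : ℕ} (hi : ee w i = top) :
    (BB φ (P l.n0) (cc w) N0 i).Finite := by
  obtain ⟨e, ge, re, he, hfin⟩ := X.part (max N0 (i + 1))
  refine ((Set.finite_lt_nat l.M).union hfin).subset ?_
  rintro m ⟨N, s, s', b, hN, hs, hs', hss, hd, hd'⟩
  rcases lt_or_ge m l.M with h | hm
  · exact Or.inl h
  right
  suffices key : ∀ u : ℕ → Gam C, Gnr top φ P u → RR top φ P l u → Agr N0 u w →
      rr top u i = top → φ (rr top u) m = true from
    ⟨key w X.g X.R (Agr.refl _ _) (rr_top hi), key e ge re (he.mono (le_max_left _ _))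
      (by rw [(he.rr (top := top)) i (by omega)]; exact rr_top hi)⟩
  intro u gu ru hu hui
  obtain ⟨t1, N1, h1, h2, b', h3⟩ := X.H.hdec l.n1 m N (spl N0 (aa w) s')
  have ht1 : Agr N0 t1 (aa w) := (h2.mono hN).trans (agr_spl _ _ _)
  by_cases hb : b' = !b
  · subst hb
    refine X.link1 gu ru hu (s := spl N s t1) (t := t1) (((agr_spl _ _ _).mono hN).trans hs) ht1 ?_
      (hd.mono h1 (agr_spl _ _ _)) h3 hm
    intro j hj hne
    rcases lt_or_ge j N with h | h
    · rw [spl_lt h, h2 j h, spl_ge hj] at hne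
      by_cases hji : j = i
      · rw [hji]; exact hui
      · exact absurd (hss j hji) hne
    · rw [spl_ge h] at hne
      exact absurd rfl hne
  · have hb' : b' = !!b := by cases b <;> cases b' <;> simp_all
    subst hb'
    refine X.link1 gu ru hu (s := spl N s' t1) (t := t1) (((agr_spl _ _ _).mono hN).trans hs') ht1 ?_
      (hd'.mono h1 (agr_spl _ _ _)) h3 hm
    intro j hj hne
    rcases lt_or_ge j N with h | h
    · rw [spl_lt h, h2 j h, spl_ge hj] at hne
      exact absurd rfl hne
    · rw [spl_ge h] at hne
      exact absurd rfl hne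

theorem Ctx.eqv (X : Ctx bot top φ P l w N0) {N : ℕ} (hc : Cpl N w) (hk : l.k ≤ N) :
    Eqv φ (P l.n0) N (cc w) (gs φ (P l.n0) l.k w N) :=
  gs_eqv (X.H.hdec _) hc hk X.R.dn

/-- Influence is detected also below the modified node. -/
theorem Ctx.mem_BB (X : Ctx bot top φ P l w N0) {i N1 N m : ℕ} {t t' : ℕ → C} {b : Bool}
    (hc : Cpl N1 w) (h01 : N0 ≤ N1) (hN : N1 ≤ N)
    (ht : Agr N1 t (Th φ (P l.n0) l.k w)) (ht' : Agr N1 t' (Th φ (P l.n0) l.k w))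
    (htt : ∀ j, j ≠ i → t j = t' j)
    (hd : Dec φ (P l.n0) N t m b) (hd' : Dec φ (P l.n0) N t' m (!b)) :
    m ∈ BB φ (P l.n0) (cc w) N0 i := by
  have hE := X.eqv hc (X.kN.trans h01)
  rw [gs_eq] at hE
  have hTh : ∀ u, Agr N1 u (Th φ (P l.n0) l.k w) →
      Agr N1 u (spl N1 (Th φ (P l.n0) l.k w) (cc w)) := fun u hu => hu.trans (agr_spl _ _ _).symm
  obtain ⟨v1, N', h1, h2, h3⟩ := hE.transfer (u := spl N1 (cc w) t) (X.H.hdec _) hN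
    (agr_spl _ _ _) (hTh _ ht) (fun j hj _ => spl_ge hj) hd
  have hd1 : Dec φ (P l.n0) N' (spl N t' v1) m (!b) := hd'.mono h1 (agr_spl _ _ _)
  obtain ⟨v2, N'', k1, k2, k3⟩ := hE.transfer (u := spl N (spl N1 (cc w) t') v1)
    (X.H.hdec _) (hN.trans h1) (((agr_spl _ _ _).mono hN).trans (agr_spl _ _ _))
    (hTh _ (((agr_spl _ _ _).mono hN).trans ht')) (by
      intro j hj _
      rcases lt_or_ge j N with h | h
      · rw [spl_lt h, spl_lt h, spl_ge hj]
      · rw [spl_ge h, spl_ge h]) hd1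
  have hv2 : ∀ j, j < N → v2 j = spl N1 (cc w) t' j := by
    intro j hj
    rw [k2 j (lt_of_lt_of_le hj h1), spl_lt hj]
  refine ⟨N'', spl N (spl N1 (cc w) t) v2, v2, b, by omega, ?_, ?_, ?_, ?_, k3⟩
  · exact ((agr_spl _ _ _).mono (h01.trans hN)).trans ((agr_spl _ _ _).mono h01)
  · intro j hj
    rw [hv2 j (by omega), spl_lt (by omega)]
  · intro j hj
    rcases lt_or_ge j N with h | h
    · rw [spl_lt h, hv2 j h]
      rcases lt_or_ge j N1 with h' | h'
      · rw [spl_lt h', spl_lt h']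
      · rw [spl_ge h', spl_ge h', htt j hj]
    · rw [spl_ge h]
  · refine h3.mono k1 ?_
    intro j hj
    rcases lt_or_ge j N with h | h
    · rw [spl_lt h, h2 j h]
    · rw [spl_ge h, k2 j hj, spl_ge h]

/-- Deciding finitely many values simultaneously. -/
theorem decide_many {Q : Set (ℕ → C)} (hdec : Decidable1 φ Q) (u : ℕ → C) (N1 i : ℕ) (hi : N1 ≤ i)
    (F : Finset (C × ℕ)) :
    ∃ x L, i < L ∧ ∀ p ∈ F, ∃ b, Dec φ Q L (Function.update (spl N1 u x) i p.1) p.2 b := by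
  classical
  induction F using Finset.induction_on with
  | empty => exact ⟨u, i + 1, Nat.lt_succ_self i, fun p hp => absurd hp (Finset.notMem_empty p)⟩
  | insert p F hp ih =>
    obtain ⟨x, L, hL, hx⟩ := ih
    obtain ⟨s, N', h1, h2, b, h3⟩ := hdec p.2 L (Function.update (spl N1 u x) i p.1)
    have hag : ∀ v, Agr L (Function.update (spl N1 u s) i v) (Function.update (spl N1 u x) i v) := by
      intro v j hj
      by_cases hji : j = i
      · subst hji; simp
      · rw [Function.update_of_ne hji, Function.update_of_ne hji]
        rcases lt_or_ge j N1 with h | h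
        · rw [spl_lt h, spl_lt h]
        · rw [spl_ge h, spl_ge h, h2 j hj, Function.update_of_ne hji, spl_ge h]
    have hs : Function.update (spl N1 u s) i p.1 = s := by
      funext j
      rcases lt_or_ge j L with h | h
      · rw [hag _ j h, h2 j h]
      · rw [Function.update_of_ne (by omega), spl_ge (by omega)]
    refine ⟨s, N', by omega, ?_⟩
    intro p' hp'
    rcases Finset.mem_insert.mp hp' with rfl | hp'
    · rw [hs]; exact ⟨b, h3⟩
    · obtain ⟨b', hb'⟩ := hx p' hp'
      exact ⟨b', hb'.mono h1 (hag _)⟩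

theorem Ctx.events [Infinite C] (X : Ctx bot top φ P l w N0) (K : ℕ) :
    ∃ i, K ≤ i ∧ Th φ (P l.n0) l.k w i ≠ cc w i := by
  classical
  have := X.g (D5 φ P (l.n0, l.k, K)) (by unfold DD; simp)
  rcases this with ⟨N, _, i, h1, _, h2⟩ | ⟨Ns, hNs⟩
  · exact ⟨i, h1, h2⟩
  exfalso
  obtain ⟨N1, hN1, hc1⟩ := X.g.cpl (max Ns (max N0 K))
  obtain ⟨i, hi, hti⟩ := X.g.exTop N1
  have hBf := X.BB_finite hti
  have hdec := X.H.hdec l.n0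
  set Q := P l.n0 with hQ
  set T := Th φ Q l.k w with hT
  obtain ⟨V, hV⟩ := Infinite.exists_subset_card_eq C (2 ^ hBf.toFinset.card + 1)
  obtain ⟨x, L, hL, hx⟩ := decide_many hdec T N1 i hi (V ×ˢ hBf.toFinset)
  set Sq : C → ℕ → C := fun v => Function.update (spl N1 T x) i v with hSq
  have hk1 : l.k ≤ N1 := X.kN.trans (by omega)
  -- nodes agreeing with `Sq v` are nonempty
  have hne : ∀ v t N, Agr L t (Sq v) → ∃ d ∈ Q, Agr N d t := by
    intro v t N ht
    refine X.R.dn t N ?_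
    intro j hj
    rw [ht j (by omega)]
    simp only [hSq]
    rw [Function.update_of_ne (by omega), spl_lt (by omega), hT, Th_low hj]
  let β : C → ℕ → Bool := fun v m => decide (Dec φ Q L (Sq v) m true)
  have hβ : ∀ v ∈ V, ∀ m ∈ BB φ Q (cc w) N0 i, Dec φ Q L (Sq v) m (β v m) := by
    intro v hv m hm
    obtain ⟨b, hb⟩ := hx (v, m) (by simp [hv, hm])
    change Dec φ Q L (Sq v) m b at hb
    by_cases h : Dec φ Q L (Sq v) m true
    · have : β v m = true := by simp [β, h]
      rw [this]; exact h
    · have : β v m = false := by simp [β, h]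
      rw [this]
      cases b
      · exact hb
      · exact absurd hb h
  obtain ⟨v, hv, v', hv', hvv, hpat⟩ := Finset.exists_ne_map_eq_of_card_lt_of_maps_to
    (s := V) (t := hBf.toFinset.powerset) (f := fun v => hBf.toFinset.filter (fun m => β v m = true))
    (by rw [Finset.card_powerset, hV]; exact Nat.lt_succ_self _)
    (by intro v _; simp)
  have hββ : ∀ m ∈ BB φ Q (cc w) N0 i, β v m = β v' m := by
    intro m hm
    have := Finset.ext_iff.mp hpat m
    simp only [Finset.mem_filter, Set.Finite.mem_toFinset, hm, true_and] at this
    exact Bool.eq_iff_iff.mpr this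
  have hEq : Eqv φ Q L (Sq v) (Sq v') := by
    intro m N t t' b hN ht ht' he hd hd'
    have hT1 : ∀ v, Agr N1 (Sq v) T := by
      intro v j hj
      simp only [hSq]
      rw [Function.update_of_ne (by omega), spl_lt hj]
    have hm : m ∈ BB φ Q (cc w) N0 i := by
      refine X.mem_BB hc1 (by omega) (by omega : N1 ≤ N) ((ht.mono (by omega)).trans (hT1 v))
        ((ht'.mono (by omega)).trans (hT1 v')) ?_ hd hd'
      intro j hj
      rcases lt_or_ge j L with h | h
      · rw [ht j h, ht' j h]
        simp only [hSq]
        rw [Function.update_of_ne hj, Function.update_of_ne hj]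
      · exact he j h
    have b1 := ((hβ v hv m hm).mono hN ht).uniq hd (hne v t N ht)
    have b2 := ((hβ v' hv' m hm).mono hN ht').uniq hd' (hne v' t' N ht')
    rw [hββ m hm, b2] at b1
    cases b <;> simp at b1
  let q : ℕ → Gam C := fun j => (Sq v' j, Sq v' j, if j = i then some (v, L) else none, bot)
  let w2 : ℕ → Gam C := spl N1 w q
  have hy2 : ∀ j, N1 ≤ j → yy w2 j = if j = i then some (v, L) else none := by
    intro j hj
    show yy (spl N1 w q) j = _
    rw [yy_spl, spl_ge hj]; rfl
  have hc2 : ∀ j, N1 ≤ j → cc w2 j = Sq v' j := by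
    intro j hj
    show cc (spl N1 w q) j = _
    rw [cc_spl, spl_ge hj]; rfl
  have hgs : gs φ Q l.k w2 i = Sq v' := by
    funext j
    rcases lt_or_ge j N1 with h | h
    · rw [gs_lt _ _ _ _ _ (by omega), ← Th_agr hc1 (agr_spl N1 w q).symm j h]
      simp only [hSq]
      rw [Function.update_of_ne (by omega), spl_lt h]
    · rcases lt_or_ge j i with h' | h'
      · rw [gs_lt _ _ _ _ _ h', Th_none, hc2 j h]
        rw [hy2 j h, if_neg (by omega)]
      · rw [gs_ge _ _ _ _ _ h', hc2 j h]
  refine hNs w2 L (by omega) ((agr_spl N1 w q).mono (by omega)) ⟨?_, i, by simp only; omega, hL, ?_⟩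
  · intro j hj u L' hy
    rcases lt_or_ge j N1 with h | h
    · have : yy w2 j = yy w j := (agr_spl N1 w q).yy j h
      rw [this] at hy
      have := hc1 j h u L' hy
      omega
    · rw [hy2 j h] at hy
      split_ifs at hy
      cases hy
      exact le_rfl
  · show Th φ Q l.k w2 i ≠ cc w2 i
    have hup : Function.update (Sq v') i v = Sq v := by
      simp only [hSq, Function.update_idem]
    rw [Th_eq, hgs, hy2 i hi, if_pos rfl, nv, if_pos ⟨by omega, hL, by rw [hup]; exact hEq⟩,
      hc2 i hi]
    simp only [hSq, Function.update_self]
    exact hvv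

theorem Ctx.absurdity [Infinite C] (X : Ctx bot top φ P l w N0) : False := by
  have hinf : {i | cc w i ≠ Th φ (P l.n0) l.k w i}.Infinite := by
    rw [Set.infinite_iff_exists_gt]
    intro K
    obtain ⟨i, h1, h2⟩ := X.events (K + 1)
    exact ⟨i, h2.symm, h1⟩
  obtain ⟨e, ge, re, he, hfin⟩ := X.part N0
  obtain ⟨m, hm1, hm2⟩ := ((X.H.h3 _ _ hinf).sdiff ((Set.finite_lt_nat l.M).union hfin)).nonempty
  rw [Set.mem_union, not_or] at hm2
  have hm : l.M ≤ m := not_lt.mp hm2.1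
  have hex : ∃ u, Gnr top φ P u ∧ RR top φ P l u ∧ Agr N0 u w ∧ φ (rr top u) m = false := by
    by_cases h : φ (rr top w) m = true
    · refine ⟨e, ge, re, he, ?_⟩
      rw [← Bool.not_eq_true]
      exact fun h' => hm2.2 ⟨h, h'⟩
    · exact ⟨w, X.g, X.R, Agr.refl _ _, by simpa using h⟩
  obtain ⟨u, gu, ru, hu, huf⟩ := hex
  obtain ⟨Na, ha⟩ := X.g.dec X.H none X.R.c0 m
  obtain ⟨Nb, hb⟩ := X.g.dec X.H (some (some (l.n0, l.k))) X.R.t4 m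
  change Dec φ (P l.n0) Na (cc w) m (φ (cc w) m) at ha
  change Dec φ (P l.n4) Nb (Th φ (P l.n0) l.k w) m (φ (Th φ (P l.n0) l.k w) m) at hb
  have hbit : φ (Th φ (P l.n0) l.k w) m = !(φ (cc w) m) := by
    have : φ (cc w) m ≠ φ (Th φ (P l.n0) l.k w) m := hm1
    revert this
    cases φ (Th φ (P l.n0) l.k w) m <;> cases φ (cc w) m <;> simp
  rw [hbit] at hb
  set b := φ (cc w) m
  set T := Th φ (P l.n0) l.k w with hT
  obtain ⟨N, hN, hcN⟩ := X.g.cpl (max N0 (max Na Nb))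
  have hk := X.kN
  have hE := X.eqv hcN (by omega)
  rw [gs_eq] at hE
  obtain ⟨v, N', h1, h2, h3⟩ := hE.symm.transfer (u := T) (X.H.hdec _) le_rfl
    (agr_spl _ _ _).symm (Agr.refl _ _) (fun j hj hj' => by omega)
    (ha.mono (by omega) (Agr.refl _ _))
  have hE0 := X.eqv X.cpl hk
  rw [gs_eq] at hE0
  obtain ⟨s, N'', k1, k2, k3⟩ := hE0.transfer (u := spl N0 (cc w) v) (u' := v) (X.H.hdec _)
    (by omega : N0 ≤ N') (agr_spl _ _ _) ((h2.mono (by omega)).trans (agr_spl _ _ _).symm)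
    (fun j hj _ => spl_ge hj) h3
  have := X.link2 gu ru hu (s := s) ((k2.mono (by omega)).trans (agr_spl _ _ _)) k3
    (hb.mono (by omega) (by
      intro j hj
      rcases lt_or_ge j N0 with h | h
      · rw [spl_lt h]
      · rw [spl_ge h, k2 j (by omega), spl_ge h, h2 j (by omega)])) hm
  rw [huf] at this
  cases this

theorem core [Countable C] [Infinite C] (H : Hyp bot top φ P) : False := by
  obtain ⟨l, w, gw, hw, hp⟩ := genericAD ((bot, bot, none, bot) : Gam C) (DD top φ P)
    (DD_countable top φ P) (DD_resp top φ P) (RR top φ P) (fun w hw => Gnr.label H hw)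
  have gw' : Gnr top φ P w := gw
  have := gw (D1 top φ P l) (by unfold DD; simp)
  rcases this with ⟨N, hN⟩ | ⟨N, hN⟩
  · exact hN ⟨w, hw, Agr.refl _ _⟩
  obtain ⟨N0, h0, hc⟩ := gw'.cpl (max N l.k)
  refine Ctx.absurdity (bot := bot) (N0 := N0) ⟨H, gw', hw, hc, by omega, ?_, ?_⟩
  · intro w' N' hN' ha
    have := hN w' N' (by omega) (ha.mono (by omega))
    unfold D1 at this
    rw [not_not] at this
    exact this
  · intro N'
    obtain ⟨e, ge, re, he, hf⟩ := hp N'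
    refine ⟨e, ge, re, he, H.h2 _ _ (hf.subset ?_)⟩
    rintro i ⟨hi, hi'⟩
    refine ⟨fun h => hi ?_, fun h => hi' ?_⟩ <;> simp [rr, rl, h]

end Core3

end OCAProof

namespace OCAProof

section Coloring

open Filter

variable {A : Type} [BooleanAlgebra A]

open Classical in
/-- The function supported on the path of `x` with values `c`. -/
def ext (x : ℕ → Bool) (c : ℕ → A) (j : ℕ) : A :=
  if h : ∃ n, path x n = j then c h.choose else ⊥

theorem ext_path (x : ℕ → Bool) (c : ℕ → A) (n : ℕ) : ext x c (path x n) = c n := by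
  have h : ∃ n', path x n' = path x n := ⟨n, rfl⟩
  unfold ext
  rw [dif_pos h, (path_inj h.choose_spec).1]

theorem ext_off (x : ℕ → Bool) (c : ℕ → A) (j : ℕ) (h : ¬ ∃ n, path x n = j) : ext x c j = ⊥ := by
  unfold ext
  rw [dif_neg h]

/-- Two functions agree if they agree on and off the path. -/
theorem path_cases {x : ℕ → Bool} {p : ℕ → Prop} (h1 : ∀ n, p (path x n))
    (h2 : ∀ j, (¬ ∃ n, path x n = j) → p j) (j : ℕ) : p j := by
  by_cases h : ∃ n, path x n = j
  · obtain ⟨n, rfl⟩ := h; exact h1 n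
  · exact h2 j h

/-- The liftings to be refuted. -/
structure Lift (Φ : (ℕ → A) → Set ℕ) : Prop where
  inf : ∀ f g, ∀ᶠ m in cofinite, (m ∈ Φ (fun i => f i ⊓ g i) ↔ m ∈ Φ f ∧ m ∈ Φ g)
  compl : ∀ f, ∀ᶠ m in cofinite, (m ∈ Φ (fun i => (f i)ᶜ) ↔ m ∉ Φ f)
  fin : ∀ f, (∀ᶠ m in cofinite, m ∉ Φ f) ↔ {i | f i ≠ ⊥}.Finite

variable {Φ : (ℕ → A) → Set ℕ}

theorem Lift.sdiff (h : Lift Φ) (f g : ℕ → A) :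
    ∀ᶠ m in cofinite, (m ∈ Φ (fun i => f i ⊓ (g i)ᶜ) ↔ m ∈ Φ f ∧ m ∉ Φ g) := by
  filter_upwards [h.inf f (fun i => (g i)ᶜ), h.compl g] with m h1 h2
  rw [h1, h2]

theorem path_injective (x : ℕ → Bool) : Function.Injective (path x) :=
  fun _ _ h => (path_inj h).1

open Classical in
/-- The restriction to one path. -/
def phi (Φ : (ℕ → A) → Set ℕ) (x : ℕ → Bool) (c : ℕ → A) (m : ℕ) : Bool :=
  decide (m ∈ Φ (ext x c) ∧ m ∈ Φ (ext x (fun _ => ⊤)))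

theorem phi_iff (x : ℕ → Bool) (c : ℕ → A) (m : ℕ) :
    phi Φ x c m = true ↔ m ∈ Φ (ext x c) ∧ m ∈ Φ (ext x (fun _ => ⊤)) := by
  simp [phi]

theorem Lift.hyp (h : Lift Φ) (x : ℕ → Bool) (P : ℕ → Set (ℕ → A)) (hcov : ∀ c, ∃ n, c ∈ P n)
    (hdec : ∀ k, Decidable1 (phi Φ x) (P k)) : Hyp ⊥ ⊤ (phi Φ x) P := by
  refine ⟨hcov, ?_, ?_, ?_, hdec⟩
  · intro c c' r hr
    have e : (fun i => ext x c i ⊓ (ext x r i)ᶜ) = (fun i => ext x c' i ⊓ (ext x r i)ᶜ) := by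
      funext j
      refine path_cases (x := x) (p := fun j => ext x c j ⊓ (ext x r j)ᶜ = ext x c' j ⊓ (ext x r j)ᶜ) ?_ ?_ j
      · intro n
        rw [ext_path, ext_path, ext_path]
        by_cases hc : c n = c' n
        · rw [hc]
        · rw [hr n hc]; simp
      · intro j hj
        rw [ext_off x c _ hj, ext_off x c' _ hj]
    have h1 := h.sdiff (ext x c) (ext x r)
    have h2 := h.sdiff (ext x c') (ext x r)
    rw [e] at h1
    have : ∀ᶠ m in cofinite, ¬ (phi Φ x c m ≠ phi Φ x c' m ∧ phi Φ x r m = false) := by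
      filter_upwards [h1, h2] with m h1 h2
      rintro ⟨hne, hr⟩
      apply hne
      rw [Bool.eq_iff_iff, phi_iff, phi_iff]
      rw [← Bool.not_eq_true, phi_iff] at hr
      tauto
    rw [eventually_cofinite] at this
    simpa using this
  · intro r r' hrr
    have e : {i | ext x r i ⊓ ext x r' i ≠ ⊥}.Finite := by
      refine (hrr.image (path x)).subset ?_
      intro j
      refine path_cases (x := x) (p := fun j => ext x r j ⊓ ext x r' j ≠ ⊥ →
        j ∈ path x '' {i | r i ≠ ⊥ ∧ r' i ≠ ⊥}) ?_ ?_ j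
      · intro n hn
        rw [ext_path, ext_path] at hn
        refine ⟨n, ⟨fun h => hn ?_, fun h => hn ?_⟩, rfl⟩ <;> simp [h]
      · intro j hj hn
        rw [ext_off _ _ _ hj] at hn
        simp at hn
    have : ∀ᶠ m in cofinite, ¬ (phi Φ x r m = true ∧ phi Φ x r' m = true) := by
      filter_upwards [h.inf (ext x r) (ext x r'), (h.fin _).mpr e] with m h1 h2
      rw [phi_iff, phi_iff]
      tauto
    rw [eventually_cofinite] at this
    simpa only [not_not] using this
  · intro c c' hinf hfin
    apply hinf
    have hev : ∀ᶠ m in cofinite, phi Φ x c m = phi Φ x c' m := by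
      rw [eventually_cofinite]; exact hfin
    have key : ∀ c c' : ℕ → A, (∀ᶠ m in cofinite, phi Φ x c m = phi Φ x c' m) →
        {i | ext x c i ⊓ (ext x c' i)ᶜ ≠ ⊥}.Finite := by
      intro c c' hev
      rw [← h.fin]
      have e : (fun i => (ext x c i ⊓ (ext x c' i)ᶜ) ⊓ ext x (fun _ => ⊤) i) =
          fun i => ext x c i ⊓ (ext x c' i)ᶜ := by
        funext j
        refine path_cases (x := x) (p := fun j => (ext x c j ⊓ (ext x c' j)ᶜ) ⊓ ext x (fun _ => ⊤) j =
          ext x c j ⊓ (ext x c' j)ᶜ) ?_ ?_ j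
        · intro n; rw [ext_path x (fun _ => ⊤)]; simp
        · intro j hj; rw [ext_off _ _ _ hj]; simp
      have h3 := h.inf (fun i => ext x c i ⊓ (ext x c' i)ᶜ) (ext x (fun _ => ⊤))
      rw [e] at h3
      filter_upwards [hev, h3, h.sdiff (ext x c) (ext x c')] with m h1 h2 h3
      rw [Bool.eq_iff_iff, phi_iff, phi_iff] at h1
      tauto
    have hf := (key c c' hev).union (key c' c (hev.mono fun m hm => hm.symm))
    refine (hf.preimage ((path_injective x).injOn)).subset ?_
    intro n hn
    show _ ∨ _
    simp only [mem_ofPred_eq, ext_path]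
    by_contra hcon
    push Not at hcon
    refine hn (le_antisymm ?_ ?_)
    · exact (disjoint_compl_right_iff).mp (disjoint_iff.mpr hcon.1)
    · exact (disjoint_compl_right_iff).mp (disjoint_iff.mpr hcon.2)

/-- Points of the coloured space. -/
structure EE (A : Type) where
  x : ℕ → Bool
  c : ℕ → A

theorem exists_code (B : Type) [Countable B] (N : ℕ) :
    ∃ p : (ℕ → B) → ℕ, ∀ s t, p s = p t → Agr N s t := by
  obtain ⟨ι, hι⟩ := exists_injective_nat (Fin N → B)
  refine ⟨fun s => ι (fun i => s i), fun s t h i hi => ?_⟩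
  exact congrFun (hι h) ⟨i, hi⟩

/-- The colour. -/
def KK (Φ : (ℕ → A) → Set ℕ) : Set (EE A × EE A) :=
  {p | p.1.x ≠ p.2.x ∧ (∀ n, path p.1.x n = path p.2.x n → p.1.c n = p.2.c n) ∧
    ∃ m, m ∈ Φ (ext p.1.x (fun _ => ⊤)) ∧ m ∈ Φ (ext p.2.x (fun _ => ⊤)) ∧
      phi Φ p.1.x p.1.c m ≠ phi Φ p.2.x p.2.c m}

theorem KK_symm : ∀ p ∈ KK Φ, (p.2, p.1) ∈ KK Φ := by
  rintro p ⟨h1, h2, m, h3, h4, h5⟩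
  exact ⟨h1.symm, fun n hn => (h2 n hn.symm).symm, m, h4, h3, h5.symm⟩

theorem OCA_apply (hOCA : OpenColoringAxiom) [Countable A] (Φ : (ℕ → A) → Set ℕ) :
    (∃ Y : Set (EE A), ¬ Y.Countable ∧ ∀ y ∈ Y, ∀ y' ∈ Y, y ≠ y' → (y, y') ∈ KK Φ) ∨
      (∃ Xn : ℕ → Set (EE A), (⋃ n, Xn n) = Set.univ ∧
        ∀ n : ℕ, ∀ y ∈ Xn n, ∀ y' ∈ Xn n, y ≠ y' → (y, y') ∉ KK Φ) := by
  classical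
  obtain ⟨ι, hι⟩ := exists_injective_nat (Bool × A × Bool × Bool)
  let z : EE A → ℕ → ℕ := fun e n =>
    ι (e.x n, e.c n, decide (n ∈ Φ (ext e.x (fun _ => ⊤))), phi Φ e.x e.c n)
  have hz : ∀ e e' n, z e n = z e' n → e.x n = e'.x n ∧ e.c n = e'.c n ∧
      (n ∈ Φ (ext e.x (fun _ => ⊤)) ↔ n ∈ Φ (ext e'.x (fun _ => ⊤))) ∧
      phi Φ e.x e.c n = phi Φ e'.x e'.c n := by
    intro e e' n h
    have := hι h
    simp only [Prod.mk.injEq, decide_eq_decide] at this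
    exact this
  have hzi : Function.Injective z := by
    rintro ⟨x, c⟩ ⟨x', c'⟩ h
    have hx : x = x' := funext fun n => (hz _ _ n (congrFun h n)).1
    have hc : c = c' := funext fun n => (hz _ _ n (congrFun h n)).2.1
    rw [hx, hc]
  let m0 : MetricSpace (ℕ → ℕ) := TopologicalSpace.metrizableSpaceMetric (ℕ → ℕ)
  let m1 : MetricSpace (EE A) := MetricSpace.induced z hzi m0
  have hcont : Continuous z := continuous_induced_dom
  have hsc : SecondCountableTopology (EE A) :=
    TopologicalSpace.secondCountableTopology_induced (EE A) (ℕ → ℕ) z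
  refine hOCA (EE A) inferInstance (KK Φ) ?_ KK_symm (fun e h => h.1 rfl)
  rw [isOpen_iff_mem_nhds]
  rintro ⟨e, e'⟩ ⟨h1, h2, m, h3, h4, h5⟩
  simp only at h1 h2 h3 h4 h5
  obtain ⟨j, hj⟩ := Function.ne_iff.mp h1
  have hev : ∀ᶠ q : EE A × EE A in 𝓝 (e, e'), ∀ n < max j m + 1,
      z q.1 n = z e n ∧ z q.2 n = z e' n := by
    refine (Filter.eventually_all_finite (Set.finite_lt_nat (max j m + 1))).mpr ?_
    intro n _
    have c1 : Continuous (fun q : EE A × EE A => z q.1 n) :=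
      (continuous_apply n).comp (hcont.comp continuous_fst)
    have c2 : Continuous (fun q : EE A × EE A => z q.2 n) :=
      (continuous_apply n).comp (hcont.comp continuous_snd)
    have e1 : ∀ᶠ q : EE A × EE A in 𝓝 (e, e'), z q.1 n = z e n :=
      ((isOpen_discrete {z e n}).preimage c1).mem_nhds (Set.mem_singleton _)
    have e2 : ∀ᶠ q : EE A × EE A in 𝓝 (e, e'), z q.2 n = z e' n :=
      ((isOpen_discrete {z e' n}).preimage c2).mem_nhds (Set.mem_singleton _)
    exact e1.and e2
  filter_upwards [hev] with q hq
  have q1 := fun n hn => hz _ _ n (hq n hn).1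
  have q2 := fun n hn => hz _ _ n (hq n hn).2
  have hj' : q.1.x j ≠ q.2.x j := by
    rw [(q1 j (by omega)).1, (q2 j (by omega)).1]; exact hj
  refine ⟨fun h => hj' (congrFun h j), ?_, m, ?_, ?_, ?_⟩
  · intro n hn
    have hnj : n ≤ j := by
      by_contra hc
      exact hj' ((path_inj hn).2 j (not_le.mp hc))
    rw [(q1 n (by omega)).2.1, (q2 n (by omega)).2.1]
    apply h2
    have a1 : path q.1.x n = path e.x n := path_eq_of_agr fun i hi => (q1 i (by omega)).1
    have a2 : path q.2.x n = path e'.x n := path_eq_of_agr fun i hi => (q2 i (by omega)).1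
    rw [← a1, ← a2, hn]
  · exact (q1 m (by omega)).2.2.1.mpr h3
  · exact (q2 m (by omega)).2.2.1.mpr h4
  · rw [(q1 m (by omega)).2.2.2, (q2 m (by omega)).2.2.2]; exact h5

theorem no_homog (h : Lift Φ) (Y : Set (EE A))
    (hY : ∀ y ∈ Y, ∀ y' ∈ Y, y ≠ y' → (y, y') ∈ KK Φ) : Y.Countable := by
  classical
  let f : ℕ → A := fun j =>
    if h : ∃ p : EE A × ℕ, p.1 ∈ Y ∧ path p.1.x p.2 = j then h.choose.1.c h.choose.2 else ⊥
  have hf : ∀ e ∈ Y, (fun i => f i ⊓ ext e.x (fun _ => ⊤) i) = ext e.x e.c := by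
    intro e he
    funext j
    refine path_cases (x := e.x) (p := fun j => f j ⊓ ext e.x (fun _ => ⊤) j = ext e.x e.c j) ?_ ?_ j
    · intro n
      rw [ext_path, ext_path, inf_top_eq]
      have hex : ∃ p : EE A × ℕ, p.1 ∈ Y ∧ path p.1.x p.2 = path e.x n := ⟨(e, n), he, rfl⟩
      show (if h : _ then _ else _) = _
      rw [dif_pos hex]
      obtain ⟨g1, g2⟩ := hex.choose_spec
      have g3 := (path_inj g2).1
      rw [g3] at g2 ⊢
      by_cases heq : hex.choose.1 = e
      · rw [heq]
      · exact (hY _ g1 _ he heq).2.1 n g2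
    · intro j hj
      rw [ext_off _ _ _ hj, ext_off _ _ _ hj, inf_bot_eq]
  have hM : ∀ e : EE A, ∃ M, e ∈ Y → ∀ m, M ≤ m → m ∈ Φ (ext e.x (fun _ => ⊤)) →
      (phi Φ e.x e.c m = true ↔ m ∈ Φ f) := by
    intro e
    by_cases he : e ∈ Y
    · have := h.inf f (ext e.x (fun _ => ⊤))
      rw [hf e he, Nat.cofinite_eq_atTop, eventually_atTop] at this
      obtain ⟨M, hM⟩ := this
      refine ⟨M, fun _ m hm hT => ?_⟩
      rw [phi_iff, hM m hm]
      tauto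
    · exact ⟨0, fun h => absurd h he⟩
  choose M hM using hM
  have hinj : Set.InjOn (fun e : EE A =>
      (M e, (Finset.range (M e)).filter (fun m => phi Φ e.x e.c m = true))) Y := by
    intro e he e' he' heq
    by_contra hne
    simp only [Prod.mk.injEq] at heq
    obtain ⟨_, _, m, h1, h2, h3⟩ := hY e he e' he' hne
    apply h3
    rw [Bool.eq_iff_iff]
    rcases lt_or_ge m (M e) with hm | hm
    · have := Finset.ext_iff.mp heq.2 m
      simp only [Finset.mem_filter, Finset.mem_range, hm, ← heq.1, true_and] at this
      exact this
    · rw [hM e he m hm h1, hM e' he' m (heq.1 ▸ hm) h2]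
  exact Set.MapsTo.countable_of_injOn (Set.mapsTo_univ _ _) hinj (Set.to_countable _)

theorem no_lift (hOCA : OpenColoringAxiom) [Countable A] [Infinite A] (h : Lift Φ) : False := by
  classical
  rcases OCA_apply hOCA Φ with ⟨Y, hYc, hY⟩ | ⟨Xn, hcov, hXn⟩
  · exact hYc (no_homog h Y hY)
  choose pb hpb using exists_code Bool
  choose pa hpa using exists_code A
  have hwit : ∀ i : ℕ × ℕ × ℕ × ℕ × ℕ, ∃ e : EE A, (∃ e0 : EE A, e0 ∈ Xn i.1 ∧
      i.2.1 ∈ Φ (ext e0.x (fun _ => ⊤)) ∧ pb i.2.2.1 e0.x = i.2.2.2.1 ∧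
      pa i.2.2.1 e0.c = i.2.2.2.2) → (e ∈ Xn i.1 ∧
      i.2.1 ∈ Φ (ext e.x (fun _ => ⊤)) ∧ pb i.2.2.1 e.x = i.2.2.2.1 ∧
      pa i.2.2.1 e.c = i.2.2.2.2) := by
    intro i
    by_cases hi : ∃ e0 : EE A, e0 ∈ Xn i.1 ∧
      i.2.1 ∈ Φ (ext e0.x (fun _ => ⊤)) ∧ pb i.2.2.1 e0.x = i.2.2.2.1 ∧
      pa i.2.2.1 e0.c = i.2.2.2.2
    · obtain ⟨e, he⟩ := hi
      exact ⟨e, fun _ => he⟩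
    · exact ⟨⟨fun _ => false, fun _ => ⊥⟩, fun h => absurd h hi⟩
  choose wit hwit using hwit
  have hx : ∃ x : ℕ → Bool, ∀ i, (wit i).x ≠ x := by
    by_contra hcon
    push Not at hcon
    exact not_countable_bool (Function.Surjective.countable (f := fun i => (wit i).x) hcon)
  obtain ⟨x, hx⟩ := hx
  refine core (h.hyp x (fun k => {c | (⟨x, c⟩ : EE A) ∈ Xn k}) ?_ ?_)
  · intro c
    have : (⟨x, c⟩ : EE A) ∈ ⋃ n, Xn n := by rw [hcov]; trivial
    obtain ⟨n, hn⟩ := Set.mem_iUnion.mp this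
    exact ⟨n, hn⟩
  · intro k m N c
    by_cases hm : m ∈ Φ (ext x (fun _ => ⊤))
    swap
    · refine ⟨c, N, le_rfl, Agr.refl _ _, false, fun d _ _ => ?_⟩
      rw [← Bool.not_eq_true, phi_iff]
      exact fun h => hm h.2
    by_cases hd : ∃ d, (⟨x, d⟩ : EE A) ∈ Xn k ∧ Agr N d c
    swap
    · exact ⟨c, N, le_rfl, Agr.refl _ _, false, fun d hd1 hd2 => absurd ⟨d, hd1, hd2⟩ hd⟩
    obtain ⟨d, hd1, hd2⟩ := hd
    obtain ⟨w1, w2, w3, w4⟩ := hwit (k, m, N, pb N x, pa N d) ⟨⟨x, d⟩, hd1, hm, rfl, rfl⟩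
    have hne := hx (k, m, N, pb N x, pa N d)
    simp only at w1 w2 w3 w4
    set e := wit (k, m, N, pb N x, pa N d)
    have hex : ∃ j, e.x j ≠ x j := Function.ne_iff.mp hne
    have hΔ : N ≤ Nat.find hex := by
      by_contra hc
      exact Nat.find_spec hex (hpb N _ _ w3 _ (not_le.mp hc))
    refine ⟨e.c, Nat.find hex + 1, by omega, (hpa N _ _ w4).trans hd2, phi Φ e.x e.c m, ?_⟩
    intro d' hd' ha
    have hK := hXn k ⟨x, d'⟩ hd' e w1 (fun heq => hne (congrArg EE.x heq).symm)
    by_contra hbit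
    refine hK ⟨fun h => hne h.symm, ?_, m, hm, w2, hbit⟩
    intro n hn
    simp only at hn ⊢
    apply ha
    by_contra hc
    exact Nat.find_spec hex ((path_inj hn).2 _ (by omega)).symm

end Coloring

end OCAProof

namespace OCAProof

section Topo

open Filter TopologicalSpace

variable {X : Type} [TopologicalSpace X]

theorem cont_ind {V : Set X} (hV : IsClopen V) [DecidablePred (· ∈ V)] :
    Continuous (fun x => decide (x ∈ V)) := by
  rw [continuous_discrete_rng]
  intro b
  cases b
  · convert hV.compl.isOpen using 1
    ext x; simp
  · convert hV.isOpen using 1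
    ext x; simp

open Classical in
/-- Extension of the indicator of a clopen set. -/
def psi {V : Set X} (hV : IsClopen V) : StoneCech X → Bool :=
  stoneCechExtend (cont_ind hV)

theorem psi_cont {V : Set X} (hV : IsClopen V) : Continuous (psi hV) :=
  continuous_stoneCechExtend _

theorem psi_unit {V : Set X} (hV : IsClopen V) (x : X) :
    psi hV (stoneCechUnit x) = true ↔ x ∈ V := by
  unfold psi
  rw [stoneCechExtend_stoneCechUnit]
  simp

theorem psi_comb {V1 V2 V3 W : Set X} (h1 : IsClopen V1) (h2 : IsClopen V2) (h3 : IsClopen V3)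
    (hW : IsClopen W) (F : Bool → Bool → Bool → Bool)
    (hF : ∀ x, psi hW (stoneCechUnit x) = F (psi h1 (stoneCechUnit x)) (psi h2 (stoneCechUnit x))
      (psi h3 (stoneCechUnit x))) (z : StoneCech X) :
    psi hW z = F (psi h1 z) (psi h2 z) (psi h3 z) := by
  have hc : Continuous (fun z => F (psi h1 z) (psi h2 z) (psi h3 z)) := by
    have hG : Continuous (fun p : Bool × Bool × Bool => F p.1 p.2.1 p.2.2) :=
      continuous_of_discreteTopology
    exact hG.comp ((psi_cont h1).prodMk ((psi_cont h2).prodMk (psi_cont h3)))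
  exact congrFun (stoneCech_hom_ext (psi_cont hW) hc (funext hF)) z

/-- A point of an open set and a `psi` value are realized by points of `X`. -/
theorem psi_real {V : Set X} (hV : IsClopen V) {z : StoneCech X} {O : Set (StoneCech X)}
    (hO : IsOpen O) (hz : z ∈ O) :
    ∃ x, stoneCechUnit x ∈ O ∧ psi hV (stoneCechUnit x) = psi hV z := by
  have ho : IsOpen (O ∩ psi hV ⁻¹' {psi hV z}) :=
    hO.inter ((isOpen_discrete _).preimage (psi_cont hV))
  obtain ⟨x, hx⟩ := denseRange_stoneCechUnit.exists_mem_open ho ⟨z, hz, rfl⟩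
  exact ⟨x, hx.1, hx.2⟩

theorem psi_compact {V : Set X} (hV : IsClopen V) (hc : IsCompact V) {z : StoneCech X}
    (hz : psi hV z = true) : ∃ x ∈ V, stoneCechUnit x = z := by
  have hcl : IsClosed ((stoneCechUnit : X → StoneCech X) '' V) :=
    (hc.image continuous_stoneCechUnit).isClosed
  by_contra hcon
  have hz' : z ∈ ((stoneCechUnit : X → StoneCech X) '' V)ᶜ := by
    rintro ⟨x, hx, rfl⟩
    exact hcon ⟨x, hx, rfl⟩
  obtain ⟨x, h1, h2⟩ := psi_real hV hcl.isOpen_compl hz'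
  rw [hz, psi_unit] at h2
  exact h1 ⟨x, h2, rfl⟩

theorem psi_free (p : ℕ → X) (S : Set ℕ) (hS : S.Infinite)
    (hloc : ∀ x : X, ∃ V : Set X, IsClopen V ∧ x ∈ V ∧ {n | p n ∈ V}.Finite)
    {W : Set X} (hW : IsClopen W) (hpW : ∀ n ∈ S, p n ∈ W) :
    ∃ z, z ∉ range (stoneCechUnit : X → StoneCech X) ∧ psi hW z = true := by
  haveI : (cofinite ⊓ 𝓟 S).NeBot := cofinite_inf_principal_neBot_iff.mpr hS
  obtain ⟨U, hU⟩ := Ultrafilter.exists_le (cofinite ⊓ 𝓟 S)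
  obtain ⟨z, -, hz⟩ := isCompact_univ.ultrafilter_le_nhds
    (U.map (fun n => (stoneCechUnit (p n) : StoneCech X))) (by simp)
  have hz' : Tendsto (fun n => (stoneCechUnit (p n) : StoneCech X)) U (𝓝 z) := hz
  have key : ∀ {V : Set X} (hV : IsClopen V), ∀ᶠ n in (U : Filter ℕ),
      psi hV (stoneCechUnit (p n)) = psi hV z := by
    intro V hV
    have ho : psi hV ⁻¹' {psi hV z} ∈ 𝓝 z :=
      ((isOpen_discrete _).preimage (psi_cont hV)).mem_nhds rfl
    exact hz' ho
  have hUS : ∀ᶠ n in (U : Filter ℕ), n ∈ S := hU (mem_inf_of_right (mem_principal_self S))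
  refine ⟨z, ?_, ?_⟩
  · rintro ⟨x, rfl⟩
    obtain ⟨V, hV, hx, hfin⟩ := hloc x
    have h1 : ∀ᶠ n in (U : Filter ℕ), p n ∉ V := by
      refine hU (mem_inf_of_left ?_)
      rw [mem_cofinite]
      refine hfin.subset ?_
      intro n hn
      simpa using hn
    obtain ⟨n, h2, h3⟩ := ((key hV).and h1).exists
    rw [(psi_unit hV x).mpr hx, psi_unit] at h2
    exact h3 h2
  · obtain ⟨n, h2, h3⟩ := ((key hW).and hUS).exists
    rw [← h2, psi_unit]
    exact hpW n h3

/-! ### Subsets of `ℕ` -/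

theorem clN (B : Set ℕ) : IsClopen B := isClopen_discrete B

theorem natStar_fin (B : Set ℕ) : (∀ u ∈ NatStar, psi (clN B) u = false) ↔ B.Finite := by
  constructor
  · intro h
    by_contra hB
    obtain ⟨z, hz, hzt⟩ := psi_free (fun n => n) B hB
      (fun x => ⟨{x}, clN _, rfl, by simp⟩) (clN B) (fun n hn => hn)
    rw [h z hz] at hzt
    cases hzt
  · intro h u hu
    rw [← Bool.not_eq_true]
    intro ht
    obtain ⟨x, _, rfl⟩ := psi_compact (clN B) h.isCompact ht
    exact hu ⟨x, rfl⟩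

theorem natStar_closed : IsClosed NatStar := by
  unfold NatStar
  rw [isClosed_compl_iff]
  have : range (stoneCechUnit : ℕ → StoneCech ℕ) = ⋃ n, psi (clN {n}) ⁻¹' {true} := by
    ext z
    constructor
    · rintro ⟨n, rfl⟩
      exact mem_iUnion.mpr ⟨n, (psi_unit (clN {n}) n).mpr rfl⟩
    · intro hz
      obtain ⟨n, hn⟩ := mem_iUnion.mp hz
      obtain ⟨x, _, rfl⟩ := psi_compact (clN {n}) isCompact_singleton hn
      exact ⟨x, rfl⟩
  rw [this]
  exact isOpen_iUnion fun n => (isOpen_discrete _).preimage (psi_cont _)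

theorem natStar_rep (g : ↥NatStar → Bool) (hg : Continuous g) :
    ∃ B : Set ℕ, ∀ u : ↥NatStar, psi (clN B) u = g u := by
  have hemb := natStar_closed.isClosedEmbedding_subtypeVal
  have hcl : ∀ b, IsClosed (Subtype.val '' (g ⁻¹' {b})) := fun b =>
    hemb.isClosedMap _ ((isClosed_discrete {b}).preimage hg)
  have hdisj : Disjoint (Subtype.val '' (g ⁻¹' {true})) (Subtype.val '' (g ⁻¹' {false})) := by
    rw [Set.disjoint_left]
    rintro _ ⟨u, hu, rfl⟩ ⟨v, hv, huv⟩
    have : v = u := Subtype.ext huv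
    subst this
    have h1 : g v = true := hu
    have h2 : g v = false := hv
    rw [h1] at h2; cases h2
  obtain ⟨O1, O0, h1, h0, k1, k0, hd⟩ := normal_separation (hcl true) (hcl false) hdisj
  refine ⟨{n | stoneCechUnit n ∈ O1}, fun u => ?_⟩
  set B : Set ℕ := {n | stoneCechUnit n ∈ O1}
  cases hb : g u
  · have hu : (u : StoneCech ℕ) ∈ O0 := k0 ⟨u, hb, rfl⟩
    obtain ⟨n, hn, hp⟩ := psi_real (clN B) h0 hu
    rw [← hp, ← Bool.not_eq_true, psi_unit]
    exact fun h => Set.disjoint_left.mp hd h hn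
  · have hu : (u : StoneCech ℕ) ∈ O1 := k1 ⟨u, hb, rfl⟩
    obtain ⟨n, hn, hp⟩ := psi_real (clN B) h1 hu
    rw [← hp, psi_unit]
    exact hn

/-! ### Clopen subsets of `D` -/

/-- The clopen algebra of `ℕ + 1`. -/
abbrev CA : Type := Clopens (OnePoint ℕ)

instance : Countable CA := by
  rw [Clopens.countable_iff_secondCountable]
  infer_instance

instance : Infinite CA := by
  have hcl : ∀ n : ℕ, IsClopen ((fun k : ℕ => (k : OnePoint ℕ)) '' {n}) := fun n =>
    ⟨OnePoint.isClosed_image_coe.mpr ⟨isClosed_discrete _, isCompact_singleton⟩,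
      OnePoint.isOpen_image_coe.mpr (isOpen_discrete _)⟩
  refine Infinite.of_injective (fun n : ℕ => (⟨_, hcl n⟩ : CA)) ?_
  intro n m h
  have := congrArg (fun V : CA => (V : Set (OnePoint ℕ))) h
  simp only [Clopens.coe_mk, image_singleton, singleton_eq_singleton_iff] at this
  exact OnePoint.coe_injective this

def CC (f : ℕ → CA) : Set SpaceD := {p | p.2 ∈ f p.1}

theorem CC_open (f : ℕ → CA) : IsOpen (CC f) := by
  have : CC f = ⋃ n, ({n} : Set ℕ) ×ˢ (f n : Set (OnePoint ℕ)) := by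
    ext ⟨n, t⟩
    simp [CC]
  rw [this]
  exact isOpen_iUnion fun n => (isOpen_discrete _).prod (f n).isClopen.isOpen

theorem CC_clopen (f : ℕ → CA) : IsClopen (CC f) := by
  refine ⟨?_, CC_open f⟩
  rw [← isOpen_compl_iff]
  exact CC_open (fun n => (f n)ᶜ)

theorem dStar_fin (f : ℕ → CA) :
    (∀ z ∈ DStar, psi (CC_clopen f) z = false) ↔ {i | f i ≠ ⊥}.Finite := by
  classical
  constructor
  · intro h
    by_contra hS
    have hex : ∀ n, ∃ t : OnePoint ℕ, f n ≠ ⊥ → t ∈ f n := by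
      intro n
      by_cases hn : f n = ⊥
      · exact ⟨OnePoint.infty, fun h => absurd hn h⟩
      · have : (f n : Set (OnePoint ℕ)).Nonempty := by
          rw [Set.nonempty_iff_ne_empty]
          intro he
          apply hn
          apply SetLike.coe_injective
          rw [he]; rfl
        obtain ⟨t, ht⟩ := this
        exact ⟨t, fun _ => ht⟩
    choose t ht using hex
    obtain ⟨z, hz, hzt⟩ := psi_free (X := SpaceD) (fun n => (n, t n)) {i | f i ≠ ⊥} hS
      (fun x => ⟨Prod.fst ⁻¹' {x.1}, (isClopen_discrete _).preimage continuous_fst, rfl, by simp⟩)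
      (CC_clopen f) (fun n hn => ht n hn)
    rw [h z hz] at hzt
    cases hzt
  · intro h z hz
    rw [← Bool.not_eq_true]
    intro hzt
    have hc : IsCompact (CC f) := by
      refine (h.isCompact.prod (isCompact_univ (X := OnePoint ℕ))).of_isClosed_subset
        (CC_clopen f).isClosed ?_
      rintro ⟨n, s⟩ hp
      refine ⟨?_, trivial⟩
      intro hn
      have hp' : s ∈ f n := hp
      simp only at hn
      rw [hn] at hp'
      exact hp'
    obtain ⟨x, _, rfl⟩ := psi_compact (CC_clopen f) hc hzt
    exact hz ⟨x, rfl⟩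

theorem main_aux (hOCA : OpenColoringAxiom) (S : ↥NatStar → ↥DStar) (hS : Continuous S)
    (hsurj : Surjective S) : False := by
  have hrep : ∀ f : ℕ → CA, ∃ B : Set ℕ, ∀ u : ↥NatStar,
      psi (clN B) u = psi (CC_clopen f) (S u) := fun f =>
    natStar_rep (fun u => psi (CC_clopen f) (S u))
      ((psi_cont _).comp (continuous_subtype_val.comp hS))
  choose Φ hΦ using hrep
  refine no_lift (Φ := Φ) hOCA ⟨?_, ?_, ?_⟩
  · intro f g
    rw [eventually_cofinite, ← natStar_fin]
    intro u hu
    let F : Bool → Bool → Bool → Bool := fun a b c => a ^^ (b && c)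
    rw [psi_comb (clN (Φ (fun i => f i ⊓ g i))) (clN (Φ f)) (clN (Φ g)) (clN _) F ?_ u]
    · have e1 := hΦ (fun i => f i ⊓ g i) ⟨u, hu⟩
      have e2 := hΦ f ⟨u, hu⟩
      have e3 := hΦ g ⟨u, hu⟩
      simp only at e1 e2 e3
      rw [e1, e2, e3]
      rw [psi_comb (CC_clopen f) (CC_clopen g) (CC_clopen g) (CC_clopen (fun i => f i ⊓ g i))
        (fun a b _ => a && b)]
      · simp [F]
      · intro x
        rw [Bool.eq_iff_iff, Bool.and_eq_true, psi_unit, psi_unit, psi_unit]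
        rfl
    · intro n
      have a1 := psi_unit (clN (Φ (fun i => f i ⊓ g i))) n
      have a2 := psi_unit (clN (Φ f)) n
      have a3 := psi_unit (clN (Φ g)) n
      rw [Bool.eq_iff_iff, psi_unit, mem_ofPred_eq, ← a1, ← a2, ← a3]
      generalize psi (clN (Φ (fun i => f i ⊓ g i))) (stoneCechUnit n) = x1
      generalize psi (clN (Φ f)) (stoneCechUnit n) = x2
      generalize psi (clN (Φ g)) (stoneCechUnit n) = x3
      cases x1 <;> cases x2 <;> cases x3 <;> simp [F]
  · intro f
    rw [eventually_cofinite, ← natStar_fin]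
    intro u hu
    let F : Bool → Bool → Bool → Bool := fun a b _ => a ^^ !b
    rw [psi_comb (clN (Φ (fun i => (f i)ᶜ))) (clN (Φ f)) (clN (Φ f)) (clN _) F ?_ u]
    · have e1 := hΦ (fun i => (f i)ᶜ) ⟨u, hu⟩
      have e2 := hΦ f ⟨u, hu⟩
      simp only at e1 e2
      rw [e1, e2]
      rw [psi_comb (CC_clopen f) (CC_clopen f) (CC_clopen f) (CC_clopen (fun i => (f i)ᶜ))
        (fun a _ _ => !a)]
      · simp [F]
      · intro x
        rw [Bool.eq_iff_iff, Bool.not_eq_true', ← Bool.not_eq_true, psi_unit, psi_unit]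
        rfl
    · intro n
      have a1 := psi_unit (clN (Φ (fun i => (f i)ᶜ))) n
      have a2 := psi_unit (clN (Φ f)) n
      rw [Bool.eq_iff_iff, psi_unit, mem_ofPred_eq, ← a1, ← a2]
      generalize psi (clN (Φ (fun i => (f i)ᶜ))) (stoneCechUnit n) = x1
      generalize psi (clN (Φ f)) (stoneCechUnit n) = x2
      cases x1 <;> cases x2 <;> simp [F]
  · intro f
    rw [eventually_cofinite, ← dStar_fin]
    have : {x | ¬ x ∉ Φ f} = Φ f := by ext; simp
    rw [this, ← natStar_fin]
    constructor
    · intro h z hz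
      obtain ⟨u, hu⟩ := hsurj ⟨z, hz⟩
      have := hΦ f u
      rw [hu, h u u.2] at this
      exact this.symm
    · intro h u hu
      rw [show psi (clN (Φ f)) u = _ from hΦ f ⟨u, hu⟩]
      exact h _ (S ⟨u, hu⟩).2

end Topo

end OCAProof

/-- OCA implies that `D*` is not a continuous image of `ℕ*`. -/
theorem OCA_implies_DStar_not_image_of_NatStar (hOCA : OpenColoringAxiom) :
    ¬ ∃ S : ↥NatStar → ↥DStar, Continuous S ∧ Surjective S := by
  rintro ⟨S, hS, hsurj⟩
  exact OCAProof.main_aux hOCA S hS hsurj
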